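/- arXiv:1703.00546 — 5 statements merged into one kernel-verified Lean document; each statement's English description precedes it below -/
import Mathlib

section
/- Let H be a complex Hilbert space, let x_1,…,x_n be self-adjoint bounded operators on H, let σ be a partition of {1,…,d}, and set [σ] := ∑_{j : ker(j) ≥ σ} x_{j_1} x_{j_2} ⋯ x_{j_d}, the sum over tuples j ∈ {1,…,n}^d whose kernel partition refines no block of σ apart (i.e., j is constant on each block of σ). Let σ_s ⊆ {1,…,d} be the set of indices lying in singleton blocks of σ and σ_ns its complement. Then ‖[σ]‖ ≤ ‖∑_{j=1}^n x_j‖^{|σ_s|} · ‖∑_{j=1}^n x_j²‖^{|σ_ns|/2}, where ‖·‖ is the operator norm. -/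
/-!
Cut the product `x (j 1) ⋯ x (j d)` after some position. A block of `σ` is *open* at the cut if it
has positions on both sides; a vector of partial sums over the labels of the other blocks to the
right of the cut is then indexed by the labels of the open blocks. Moving the cut one position to
the left acts on this vector as an operator in the label of one block only: as a column if the block
opens, as a diagonal if it stays open, as a row if it closes, and as `∑ j, x j` if it is a
singleton. With the square-sum norm on the vectors, the first three operators have norm at most
`rowColNorm x`, which is `‖∑ j, x j ^ 2‖ ^ (1 / 2)` for self-adjoint `x j`, and the bound is the
product of these norms.
-/

open ContinuousLinearMap

section RowColNorm

variable {𝕜 E F ι : Type*} [RCLike 𝕜] [NormedAddCommGroup E] [InnerProductSpace 𝕜 E]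
  [CompleteSpace E] [NormedAddCommGroup F] [InnerProductSpace 𝕜 F] [CompleteSpace F] [Fintype ι]

/-- The norm of a finite family of operators in the operator space `R ∩ C`: the larger of the norms
of the row `(x i)ᵢ` and of the column `(x i)ᵢ`. -/
noncomputable def rowColNorm (x : ι → E →L[𝕜] F) : ℝ :=
  √(max ‖∑ i, adjoint (x i) ∘L x i‖ ‖∑ i, x i ∘L adjoint (x i)‖)

lemma rowColNorm_nonneg (x : ι → E →L[𝕜] F) : 0 ≤ rowColNorm x :=
  Real.sqrt_nonneg _

lemma sq_rowColNorm (x : ι → E →L[𝕜] F) :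
    rowColNorm x ^ 2 = max ‖∑ i, adjoint (x i) ∘L x i‖ ‖∑ i, x i ∘L adjoint (x i)‖ :=
  Real.sq_sqrt (by positivity)

lemma sum_norm_sq_apply_le_norm_sum_adjoint_comp (x : ι → E →L[𝕜] F) (h : E) :
    ∑ i, ‖x i h‖ ^ 2 ≤ ‖∑ i, adjoint (x i) ∘L x i‖ * ‖h‖ ^ 2 :=
  calc ∑ i, ‖x i h‖ ^ 2 = RCLike.re (inner 𝕜 ((∑ i, adjoint (x i) ∘L x i) h) h) := by
        simp only [apply_norm_sq_eq_inner_adjoint_left, sum_apply, sum_inner, map_sum]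
    _ ≤ ‖(∑ i, adjoint (x i) ∘L x i) h‖ * ‖h‖ := re_inner_le_norm _ _
    _ ≤ ‖∑ i, adjoint (x i) ∘L x i‖ * ‖h‖ * ‖h‖ := by gcongr; exact le_opNorm _ _
    _ = ‖∑ i, adjoint (x i) ∘L x i‖ * ‖h‖ ^ 2 := by ring

lemma norm_sq_sum_apply_le_norm_sum_comp_adjoint (x : ι → E →L[𝕜] F) (g : ι → E) :
    ‖∑ i, x i (g i)‖ ^ 2 ≤ ‖∑ i, x i ∘L adjoint (x i)‖ * ∑ i, ‖g i‖ ^ 2 := by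
  set y := ∑ i, x i (g i)
  have pairing : ‖y‖ ^ 2 ≤ ∑ i, ‖adjoint (x i) y‖ * ‖g i‖ :=
    calc ‖y‖ ^ 2 = RCLike.re (inner 𝕜 y (∑ i, x i (g i))) := (inner_self_eq_norm_sq y).symm
      _ = ∑ i, RCLike.re (inner 𝕜 (adjoint (x i) y) (g i)) := by
        simp only [inner_sum, map_sum, adjoint_inner_left]
      _ ≤ ∑ i, ‖adjoint (x i) y‖ * ‖g i‖ := Finset.sum_le_sum fun i _ => re_inner_le_norm _ _
  have column : ∑ i, ‖adjoint (x i) y‖ ^ 2 ≤ ‖∑ i, x i ∘L adjoint (x i)‖ * ‖y‖ ^ 2 := by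
    simpa only [adjoint_adjoint] using
      sum_norm_sq_apply_le_norm_sum_adjoint_comp (fun i => adjoint (x i)) y
  rcases eq_or_ne y 0 with hy0 | hy0
  · rw [hy0, norm_zero, zero_pow two_ne_zero]
    positivity
  · refine le_of_mul_le_mul_left ?_ (show 0 < ‖y‖ ^ 2 by positivity)
    calc ‖y‖ ^ 2 * ‖y‖ ^ 2 = (‖y‖ ^ 2) ^ 2 := by ring
      _ ≤ (∑ i, ‖adjoint (x i) y‖ * ‖g i‖) ^ 2 := by gcongr
      _ ≤ (∑ i, ‖adjoint (x i) y‖ ^ 2) * ∑ i, ‖g i‖ ^ 2 := Finset.sum_mul_sq_le_sq_mul_sq _ _ _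
      _ ≤ ‖∑ i, x i ∘L adjoint (x i)‖ * ‖y‖ ^ 2 * ∑ i, ‖g i‖ ^ 2 := by gcongr
      _ = ‖y‖ ^ 2 * (‖∑ i, x i ∘L adjoint (x i)‖ * ∑ i, ‖g i‖ ^ 2) := by ring

lemma sum_norm_sq_apply_le (x : ι → E →L[𝕜] F) (h : E) :
    ∑ i, ‖x i h‖ ^ 2 ≤ rowColNorm x ^ 2 * ‖h‖ ^ 2 := by
  rw [sq_rowColNorm]
  exact (sum_norm_sq_apply_le_norm_sum_adjoint_comp x h).trans (by gcongr; exact le_max_left _ _)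

lemma norm_sq_sum_apply_le (x : ι → E →L[𝕜] F) (g : ι → E) :
    ‖∑ i, x i (g i)‖ ^ 2 ≤ rowColNorm x ^ 2 * ∑ i, ‖g i‖ ^ 2 := by
  rw [sq_rowColNorm]
  exact (norm_sq_sum_apply_le_norm_sum_comp_adjoint x g).trans (by gcongr; exact le_max_right _ _)

lemma sum_norm_sq_apply_apply_le (x : ι → E →L[𝕜] F) (g : ι → E) :
    ∑ i, ‖x i (g i)‖ ^ 2 ≤ rowColNorm x ^ 2 * ∑ i, ‖g i‖ ^ 2 := by
  rw [Finset.mul_sum]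
  refine Finset.sum_le_sum fun i _ => le_trans ?_ (sum_norm_sq_apply_le x (g i))
  exact Finset.single_le_sum (f := fun j => ‖x j (g i)‖ ^ 2) (fun _ _ => by positivity)
    (Finset.mem_univ i)

end RowColNorm

section PartitionSum

variable {Q ι R : Type*} {d : ℕ}

/-- The tuples `j` that occur in the sum over a partition when the labels of some of its blocks are
prescribed. The partition consists of the fibers of `w`, and `u` prescribes the labels, with `none`
for a block whose label is free. -/
def IsLabeling (w : Fin d → Q) (u : Q → Option ι) (j : Fin d → ι) : Prop :=
  Setoid.ker w ≤ Setoid.ker j ∧ ∀ k, ∀ i ∈ u (w k), j k = i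

lemma isLabeling_none_iff {w : Fin d → Q} {j : Fin d → ι} :
    IsLabeling w (fun _ => none) j ↔ Setoid.ker w ≤ Setoid.ker j := by
  simp [IsLabeling]

lemma isLabeling_congr {w : Fin d → Q} {u u' : Q → Option ι} (h : ∀ k, u (w k) = u' (w k))
    {j : Fin d → ι} : IsLabeling w u j ↔ IsLabeling w u' j := by
  simp only [IsLabeling, h]

lemma isLabeling_cons_iff [DecidableEq Q] {w : Fin (d + 1) → Q} {u : Q → Option ι} {i : ι}
    {j : Fin d → ι} :
    IsLabeling w u (Fin.cons i j) ↔
      (∀ i' ∈ u (w 0), i = i') ∧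
        IsLabeling (Fin.tail w) (Function.update u (w 0) (some i)) j := by
  have prescribed_iff (k : Fin d) :
      (∀ i' ∈ Function.update u (w 0) (some i) (w k.succ), j k = i') ↔
        (w k.succ = w 0 → j k = i) ∧ (w k.succ ≠ w 0 → ∀ i' ∈ u (w k.succ), j k = i') := by
    by_cases h : w k.succ = w 0 <;> simp [h, eq_comm]
  simp only [IsLabeling, Setoid.le_def, Setoid.ker_def, Fin.forall_fin_succ, Fin.cons_zero,
    Fin.cons_succ, Fin.tail, prescribed_iff]
  grind

/-- The part of the full sum over the partition into the fibers of `w` in which the labels of some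
blocks are prescribed by `u`. The operators may depend on the position, so that the part of the
product to the right of a cut is again of this form. -/
noncomputable def partitionSum [Fintype ι] [Semiring R] (x : Fin d → ι → R) (w : Fin d → Q)
    (u : Q → Option ι) : R :=
  open scoped Classical in
  ∑ j with IsLabeling w u j, ((List.finRange d).map fun k => x k (j k)).prod

variable [Fintype ι] [Semiring R]

lemma partitionSum_zero (x : Fin 0 → ι → R) (w : Fin 0 → Q) (u : Q → Option ι) :
    partitionSum x w u = 1 := by
  simp [partitionSum, IsLabeling, Setoid.le_def]

lemma partitionSum_none (x : Fin d → ι → R) (w : Fin d → Q) :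
    partitionSum x w (fun _ => none) =
      ∑ᶠ j ∈ {j : Fin d → ι | Setoid.ker w ≤ Setoid.ker j},
        ((List.finRange d).map fun k => x k (j k)).prod := by
  classical
  rw [finsum_mem_eq_toFinset_sum, Set.toFinset_ofPred]
  simp only [partitionSum, isLabeling_none_iff]

lemma partitionSum_update_of_forall_ne [DecidableEq Q] (x : Fin d → ι → R) {w : Fin d → Q}
    {q : Q} (hq : ∀ k, w k ≠ q) (u : Q → Option ι) (o : Option ι) :
    partitionSum x w (Function.update u q o) = partitionSum x w u := by
  have agree (k : Fin d) : Function.update u q o (w k) = u (w k) :=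
    Function.update_of_ne (hq k) o u
  classical
  simp only [partitionSum, isLabeling_congr agree]

lemma partitionSum_succ [DecidableEq Q] [DecidableEq ι] (x : Fin (d + 1) → ι → R)
    (w : Fin (d + 1) → Q) (u : Q → Option ι) :
    partitionSum x w u = ∑ i with ∀ i' ∈ u (w 0), i = i', x 0 i *
      partitionSum (Fin.tail x) (Fin.tail w) (Function.update u (w 0) (some i)) := by
  classical
  simp only [partitionSum, Finset.sum_filter, Finset.mul_sum]
  rw [← (Fin.consEquiv fun _ : Fin (d + 1) => ι).sum_comp, Fintype.sum_prod_type]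
  refine Finset.sum_congr rfl fun i _ => ?_
  simp [Fin.consEquiv, isLabeling_cons_iff, ite_and, Finset.sum_ite_irrel, List.finRange_succ,
    Function.comp_def, Fin.tail]

lemma partitionSum_succ_of_eq_none [DecidableEq Q] (x : Fin (d + 1) → ι → R)
    (w : Fin (d + 1) → Q) {u : Q → Option ι} (hu : u (w 0) = none) :
    partitionSum x w u =
      ∑ i, x 0 i * partitionSum (Fin.tail x) (Fin.tail w) (Function.update u (w 0) (some i)) := by
  classical
  simp [partitionSum_succ, hu]

lemma partitionSum_succ_update [DecidableEq Q] (x : Fin (d + 1) → ι → R) (w : Fin (d + 1) → Q)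
    (u : Q → Option ι) (i : ι) :
    partitionSum x w (Function.update u (w 0) (some i)) =
      x 0 i * partitionSum (Fin.tail x) (Fin.tail w) (Function.update u (w 0) (some i)) := by
  classical
  simp [partitionSum_succ x, Finset.sum_filter]

end PartitionSum

section PartialLabelings

variable {Q ι : Type*} [Fintype Q] [DecidableEq Q] [Fintype ι]

/-- The assignments of labels to the blocks in `O` and to no other block: the index set of the
vector of partial sums when `O` is the set of open blocks. -/
def partialLabelings (ι : Type*) [Fintype ι] (O : Finset Q) : Finset (Q → Option ι) :=
  {u | ∀ q, (u q).isSome ↔ q ∈ O}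

lemma mem_partialLabelings {O : Finset Q} {u : Q → Option ι} :
    u ∈ partialLabelings ι O ↔ ∀ q, (u q).isSome ↔ q ∈ O := by
  simp [partialLabelings]

lemma eq_none_of_mem_partialLabelings {O : Finset Q} {u : Q → Option ι}
    (hu : u ∈ partialLabelings ι O) {q : Q} (hq : q ∉ O) : u q = none := by
  simpa using (mem_partialLabelings.1 hu q).not.2 hq

lemma partialLabelings_empty : partialLabelings ι (∅ : Finset Q) = {fun _ => none} := by
  ext u
  simp [mem_partialLabelings, funext_iff]

lemma sum_partialLabelings_insert {M : Type*} [AddCommMonoid M] {O : Finset Q} {q : Q}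
    (hq : q ∉ O) (f : (Q → Option ι) → M) :
    ∑ u ∈ partialLabelings ι (insert q O), f u =
      ∑ u ∈ partialLabelings ι O, ∑ i, f (Function.update u q (some i)) := by
  rw [← Finset.sum_product']
  symm
  refine Finset.sum_bij (fun p _ => Function.update p.1 q (some p.2)) ?_ ?_ ?_ fun _ _ => rfl
  · rintro ⟨u, i⟩ hu
    simp only [Finset.mem_product, mem_partialLabelings, Finset.mem_univ, and_true] at hu ⊢
    intro r
    by_cases hr : r = q <;> simp [hr, hu]
  · rintro ⟨u, i⟩ hu ⟨u', i'⟩ hu' h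
    simp only [Finset.mem_product, Finset.mem_univ, and_true] at hu hu'
    refine Prod.ext (funext fun r => ?_) (by simpa using congrFun h q)
    rcases eq_or_ne r q with rfl | hr
    · exact (eq_none_of_mem_partialLabelings hu hq).trans
        (eq_none_of_mem_partialLabelings hu' hq).symm
    · simpa [hr] using congrFun h r
  · intro u hu
    rw [mem_partialLabelings] at hu
    obtain ⟨i, hi⟩ := Option.isSome_iff_exists.1 ((hu q).2 (Finset.mem_insert_self q O))
    refine ⟨(Function.update u q none, i), ?_, by simp [← hi]⟩
    simp only [Finset.mem_product, mem_partialLabelings, Finset.mem_univ, and_true]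
    intro r
    by_cases hr : r = q <;> simp [hr, hq, hu]

lemma sum_partialLabelings_eq_sum_erase {M : Type*} [AddCommMonoid M] (O : Finset Q) (q : Q)
    (f : (Q → Option ι) → M) :
    ∑ u ∈ partialLabelings ι O, f u = ∑ u ∈ partialLabelings ι (O.erase q),
      if q ∈ O then ∑ i, f (Function.update u q (some i)) else f u := by
  split_ifs with hq
  · rw [← sum_partialLabelings_insert (Finset.notMem_erase q O), Finset.insert_erase hq]
  · rw [Finset.erase_eq_of_notMem hq]

end PartialLabelings

section NormBounds

variable {𝕜 H Q ι : Type*} {d : ℕ} [RCLike 𝕜] [NormedAddCommGroup H] [InnerProductSpace 𝕜 H]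
  [CompleteSpace H] [DecidableEq Q] [Fintype ι]

/-- The bound on the norm of the step across position `k` of `w`. Here `w` is the part of a product
to the right of a cut, and `P` is the set of blocks that occur to the left of that cut. -/
noncomputable def positionBound (x : Fin d → ι → H →L[𝕜] H) (w : Fin d → Q) (P : Finset Q)
    (k : Fin d) : ℝ :=
  if w k ∉ P ∧ ∀ l, w l = w k → l = k then ‖∑ i, x k i‖ else rowColNorm (x k)

lemma positionBound_nonneg (x : Fin d → ι → H →L[𝕜] H) (w : Fin d → Q) (P : Finset Q)
    (k : Fin d) : 0 ≤ positionBound x w P k := by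
  unfold positionBound
  split_ifs
  exacts [norm_nonneg _, rowColNorm_nonneg _]

lemma positionBound_zero (x : Fin (d + 1) → ι → H →L[𝕜] H) (w : Fin (d + 1) → Q) (P : Finset Q) :
    positionBound x w P 0 =
      if w 0 ∉ P ∧ ∀ k, Fin.tail w k ≠ w 0 then ‖∑ i, x 0 i‖ else rowColNorm (x 0) := by
  refine if_congr ?_ rfl rfl
  simp [Fin.forall_fin_succ, Fin.tail]

lemma positionBound_succ (x : Fin (d + 1) → ι → H →L[𝕜] H) (w : Fin (d + 1) → Q) (P : Finset Q)
    (k : Fin d) :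
    positionBound x w P k.succ = positionBound (Fin.tail x) (Fin.tail w) (insert (w 0) P) k := by
  have unique_iff : (w k.succ ∉ P ∧ ∀ l, w l = w k.succ → l = k.succ) ↔
      w k.succ ∉ insert (w 0) P ∧ ∀ l : Fin d, w l.succ = w k.succ → l = k := by
    simp only [Fin.forall_fin_succ, Fin.succ_inj, Finset.mem_insert]
    grind
  exact if_congr unique_iff rfl rfl

lemma sum_norm_sq_partitionSum_succ_le_of_eq_none (x : Fin (d + 1) → ι → H →L[𝕜] H)
    (w : Fin (d + 1) → Q) (P : Finset Q) (ξ : H) {u : Q → Option ι} (hu : u (w 0) = none) :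
    (if w 0 ∈ P then ∑ i, ‖partitionSum x w (Function.update u (w 0) (some i)) ξ‖ ^ 2
      else ‖partitionSum x w u ξ‖ ^ 2) ≤
      positionBound x w P 0 ^ 2 *
        if ∃ k, Fin.tail w k = w 0 then
          ∑ i, ‖partitionSum (Fin.tail x) (Fin.tail w) (Function.update u (w 0) (some i)) ξ‖ ^ 2
        else ‖partitionSum (Fin.tail x) (Fin.tail w) u ξ‖ ^ 2 := by
  rw [positionBound_zero]
  simp only [partitionSum_succ_update, partitionSum_succ_of_eq_none x w hu, sum_apply,
    mul_apply_eq_comp]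
  by_cases left : w 0 ∈ P <;> by_cases right : ∃ k, Fin.tail w k = w 0
  · rw [if_pos left, if_pos right, if_neg fun h => h.1 left]
    exact sum_norm_sq_apply_apply_le _ _
  · rw [if_pos left, if_neg right, if_neg fun h => h.1 left]
    simp only [partitionSum_update_of_forall_ne _ (not_exists.1 right)]
    exact sum_norm_sq_apply_le _ _
  · rw [if_neg left, if_pos right, if_neg fun h => not_exists.2 h.2 right]
    exact norm_sq_sum_apply_le _ _
  · rw [if_neg left, if_neg right, if_pos ⟨left, not_exists.1 right⟩]
    simp only [partitionSum_update_of_forall_ne _ (not_exists.1 right)]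
    rw [← sum_apply, ← mul_pow]
    gcongr
    exact le_opNorm _ _

lemma sum_norm_sq_partitionSum_succ_le [Fintype Q] (x : Fin (d + 1) → ι → H →L[𝕜] H)
    (w : Fin (d + 1) → Q) (P : Finset Q) (ξ : H) :
    ∑ u ∈ partialLabelings ι (P ∩ Finset.univ.image w), ‖partitionSum x w u ξ‖ ^ 2 ≤
      positionBound x w P 0 ^ 2 *
        ∑ u ∈ partialLabelings ι (insert (w 0) P ∩ Finset.univ.image (Fin.tail w)),
          ‖partitionSum (Fin.tail x) (Fin.tail w) u ξ‖ ^ 2 := by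
  have mem_word : w 0 ∈ P ∩ Finset.univ.image w ↔ w 0 ∈ P := by simp
  have mem_tail : w 0 ∈ insert (w 0) P ∩ Finset.univ.image (Fin.tail w) ↔
      ∃ k, Fin.tail w k = w 0 := by simp
  have erase_eq : (P ∩ Finset.univ.image w).erase (w 0) =
      (insert (w 0) P ∩ Finset.univ.image (Fin.tail w)).erase (w 0) := by
    ext r
    simp only [Finset.mem_erase, Finset.mem_inter, Finset.mem_insert, Finset.mem_image,
      Finset.mem_univ, true_and, Fin.exists_fin_succ, Fin.tail]
    grind
  rw [sum_partialLabelings_eq_sum_erase _ (w 0),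
    sum_partialLabelings_eq_sum_erase (insert (w 0) P ∩ _) (w 0), erase_eq, Finset.mul_sum]
  refine Finset.sum_le_sum fun u hu => ?_
  have unlabeled : u (w 0) = none := eq_none_of_mem_partialLabelings hu (Finset.notMem_erase _ _)
  simp only [mem_word, mem_tail]
  exact sum_norm_sq_partitionSum_succ_le_of_eq_none x w P ξ unlabeled

lemma sum_norm_sq_partitionSum_le [Fintype Q] (x : Fin d → ι → H →L[𝕜] H) (w : Fin d → Q)
    (P : Finset Q) (ξ : H) :
    ∑ u ∈ partialLabelings ι (P ∩ Finset.univ.image w), ‖partitionSum x w u ξ‖ ^ 2 ≤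
      (∏ k, positionBound x w P k) ^ 2 * ‖ξ‖ ^ 2 := by
  induction d generalizing P with
  | zero => simp [partialLabelings_empty, partitionSum_zero]
  | succ d ih =>
    calc _ ≤ positionBound x w P 0 ^ 2 *
          ∑ u ∈ partialLabelings ι (insert (w 0) P ∩ Finset.univ.image (Fin.tail w)),
            ‖partitionSum (Fin.tail x) (Fin.tail w) u ξ‖ ^ 2 :=
          sum_norm_sq_partitionSum_succ_le x w P ξ
      _ ≤ positionBound x w P 0 ^ 2 * ((∏ k, positionBound (Fin.tail x) (Fin.tail w)
          (insert (w 0) P) k) ^ 2 * ‖ξ‖ ^ 2) := by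
        gcongr
        exact ih _ _ _
      _ = (∏ k, positionBound x w P k) ^ 2 * ‖ξ‖ ^ 2 := by
        simp only [Fin.prod_univ_succ, positionBound_succ]
        ring

theorem norm_finsum_le_ker_le_prod [Finite Q] (x : Fin d → ι → H →L[𝕜] H) (w : Fin d → Q) :
    ‖∑ᶠ j ∈ {j : Fin d → ι | Setoid.ker w ≤ Setoid.ker j},
        ((List.finRange d).map fun k => x k (j k)).prod‖ ≤
      ∏ k, if ∀ l, w l = w k → l = k then ‖∑ i, x k i‖ else rowColNorm (x k) := by
  have := Fintype.ofFinite Q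
  have bound_eq (k : Fin d) : (if ∀ l, w l = w k → l = k then ‖∑ i, x k i‖ else rowColNorm (x k)) =
      positionBound x w ∅ k := by
    simp [positionBound]
  simp only [bound_eq, ← partitionSum_none]
  have nonneg := Finset.prod_nonneg fun k (_ : k ∈ Finset.univ) => positionBound_nonneg x w ∅ k
  refine opNorm_le_bound _ nonneg fun ξ => le_of_sq_le_sq ?_ (by positivity)
  simpa [partialLabelings_empty, mul_pow] using sum_norm_sq_partitionSum_le x w ∅ ξ

end NormBounds

theorem norm_fullPartitionSum_le_general {𝕜 H ι : Type*} [RCLike 𝕜] [NormedAddCommGroup H]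
    [InnerProductSpace 𝕜 H] [CompleteSpace H] [Fintype ι] {d : ℕ} (x : ι → H →L[𝕜] H)
    (σ : Setoid (Fin d)) :
    ‖∑ᶠ j ∈ {j : Fin d → ι | σ ≤ Setoid.ker j},
        ((List.finRange d).map (fun k => x (j k))).prod‖ ≤
      ‖∑ i, x i‖ ^ (Nat.card {k : Fin d | ∀ l, σ k l → l = k}) *
        max ‖∑ i, adjoint (x i) ∘L x i‖ ‖∑ i, x i ∘L adjoint (x i)‖ ^
          ((Nat.card {k : Fin d | ¬ ∀ l, σ k l → l = k} : ℝ) / 2) := by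
  classical
  have ker_mk : Setoid.ker (Quotient.mk σ) = σ := Setoid.ker_mk_eq σ
  have singleton_iff (k : Fin d) : (∀ l, Quotient.mk σ l = Quotient.mk σ k → l = k) ↔
      ∀ l, σ k l → l = k :=
    forall_congr' fun l => by rw [Quotient.eq, σ.comm']
  have bound := norm_finsum_le_ker_le_prod (fun _ => x) (Quotient.mk σ)
  rw [ker_mk] at bound
  rw [Real.rpow_div_two_eq_sqrt _ (by positivity), Real.rpow_natCast]
  refine bound.trans_eq ?_
  simp [singleton_iff, Finset.prod_ite, Fintype.card_subtype, rowColNorm]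

/-- Pisier-type norm estimate for a full partition sum of self-adjoint operators:
for a partition `σ` of `{1,…,d}` (modeled as `Setoid (Fin d)`) and self-adjoint
bounded operators `x 1, …, x n` on a complex Hilbert space `H`,
`‖[σ]‖ ≤ ‖∑ x j‖ ^ |σ_s| * ‖∑ x j ^ 2‖ ^ (|σ_ns| / 2)`, where
`[σ] = ∑_{j : ker j ≥ σ} x_{j 1} ⋯ x_{j d}` (the sum over tuples constant on each
block of `σ`), `σ_s` is the set of indices in singleton blocks of `σ`, and `σ_ns`
its complement. -/
theorem norm_fullPartitionSum_le {H : Type*} [NormedAddCommGroup H]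
    [InnerProductSpace ℂ H] [CompleteSpace H] (n d : ℕ) (hd : 1 ≤ d)
    (x : Fin n → H →L[ℂ] H) (hx : ∀ j, IsSelfAdjoint (x j))
    (σ : Setoid (Fin d)) :
    ‖∑ᶠ j ∈ {j : Fin d → Fin n | σ ≤ Setoid.ker j},
        ((List.finRange d).map (fun k => x (j k))).prod‖ ≤
      ‖∑ j, x j‖ ^ (Nat.card {k : Fin d | ∀ l, σ k l → l = k}) *
        ‖∑ j, (x j) ^ 2‖ ^
          ((Nat.card {k : Fin d | ¬ ∀ l, σ k l → l = k} : ℝ) / 2) := by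
  simpa only [(hx _).adjoint_eq, ← mul_def, ← sq, max_self] using
    norm_fullPartitionSum_le_general x σ
end

section
/- Let H be a complex Hilbert space, 1 ≤ d ≤ n, and let x_1,…,x_n be positive bounded operators on H. Then ‖P_d(x_1,…,x_n)‖ ≤ (d!·n^d·(n−d)!/n!)·‖P_1(x_1,…,x_n)‖^d, where ‖·‖ is the operator norm. -/
open scoped BigOperators

/-- The average product
`P_d(x_1,…,x_n) = ((n-d)!/n!) ∑_{i injective} x_{i 1} x_{i 2} ⋯ x_{i d}`,
the sum running over all `d`-tuples of pairwise distinct indices in `{1,…,n}`. -/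
noncomputable def avgProd {A : Type*} [Ring A] [Module ℝ A] (n d : ℕ)
    (x : Fin n → A) : A :=
  ((Nat.factorial (n - d) : ℝ) / (Nat.factorial n : ℝ)) •
    ∑ i ∈ Finset.univ.filter (fun i : Fin d → Fin n => Function.Injective i),
      ((List.finRange d).map (fun k => x (i k))).prod

/-!
Let `v_1, …, v_d` be independent uniformly random sign vectors in `{±1}ⁿ`. Since
`𝔼 v_k(a) v_k(b) = 1` if `a = b` and `0` otherwise, the expectation of
`∏ₖ v_k(i_k) · det (v_k(i_l))_{k,l}` is `det (1_{i_k = i_l})_{k,l}`, the indicator of `i` being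
injective. Expanding the random determinant over permutations writes the sum over injective tuples
as an average of `d!` signed products `∏ₖ (∑ⱼ ± x_j)`. Each factor has norm at most `‖∑ⱼ x_j‖`,
because `-∑ⱼ x_j ≤ ∑ⱼ ± x_j ≤ ∑ⱼ x_j` when the `x_j` are positive.
-/

open Function Matrix
open Equiv (Perm)

section Signs

variable {ι κ : Type*} [DecidableEq ι] [Fintype κ] [DecidableEq κ]

lemma sum_signs_mul_signs [Fintype ι] (a b : ι) :
    ∑ w : ι → ℤˣ, (w a : ℤ) * w b = if a = b then 2 ^ Fintype.card ι else 0 := by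
  split_ifs with hab
  · subst hab
    simp [← Units.val_mul, Int.units_mul_self]
  · -- Flipping the sign at `a` negates the sum.
    have flip := Equiv.sum_comp (Equiv.mulLeft (Pi.mulSingle a (-1) : ι → ℤˣ))
      fun w : ι → ℤˣ => (w a : ℤ) * w b
    simp only [Equiv.coe_mulLeft, Pi.mul_apply, Pi.mulSingle_eq_same,
      Pi.mulSingle_eq_of_ne (Ne.symm hab), neg_mul, one_mul, Units.val_neg,
      Finset.sum_neg_distrib] at flip
    exact self_eq_neg.mp flip.symm

lemma det_submatrix_one {R : Type*} [CommRing R] (i : κ → ι) :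
    ((1 : Matrix ι ι R).submatrix i i).det = if Injective i then 1 else 0 := by
  split_ifs with hi
  · rw [submatrix_one i hi, det_one]
  · obtain ⟨k, l, hkl, hne⟩ := not_injective_iff.mp hi
    exact det_zero_of_row_eq hne (congrArg (fun a => (1 : Matrix ι ι R) a ∘ i) hkl)

lemma prod_diag_mul_det {R : Type*} [CommRing R] (M : Matrix κ κ R) :
    (∏ k, M k k) * M.det =
      ∑ σ : Perm κ, ((σ.sign : ℤ) : R) * ∏ k, M k k * M (σ k) k := by
  simp only [det_apply', Finset.mul_sum, Finset.prod_mul_distrib, mul_left_comm]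

lemma sum_signs_prod_mul_det [Fintype ι] (i : κ → ι) :
    ∑ v : κ → ι → ℤˣ, (∏ k, (v k (i k) : ℤ)) * (of fun k l => (v k (i l) : ℤ)).det =
      if Injective i then (2 ^ Fintype.card ι) ^ Fintype.card κ else 0 := by
  calc
    _ = ∑ v : κ → ι → ℤˣ, (of fun k l => (v k (i k) : ℤ) * v k (i l)).det :=
      Finset.sum_congr rfl fun v _ => (det_mul_column (fun k => (v k (i k) : ℤ)) _).symm
    _ = (of fun k => ∑ w : ι → ℤˣ, fun l => (w (i k) : ℤ) * w (i l)).det :=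
      (detRowAlternating.toMultilinearMap.map_sum
        fun k (w : ι → ℤˣ) l => (w (i k) : ℤ) * w (i l)).symm
    _ = ((2 ^ Fintype.card ι : ℤ) • (1 : Matrix ι ι ℤ).submatrix i i).det := by
      congr 1
      ext k l
      simp [sum_signs_mul_signs, one_apply]
    _ = _ := by rw [det_smul, det_submatrix_one, mul_ite, mul_one, mul_zero]

end Signs

section Multilinear

variable {ι κ : Type*} [Fintype ι] [Fintype κ] [DecidableEq κ]
  {E : κ → Type*} {G : Type*}

lemma map_sum_units_smul [∀ k, AddCommGroup (E k)] [AddCommGroup G] (f : MultilinearMap ℤ E G)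
    (u : κ → ι → ℤˣ) (x : ∀ k, ι → E k) :
    f (fun k => ∑ j, u k j • x k j) =
      ∑ i : κ → ι, (∏ k, (u k (i k) : ℤ)) • f fun k => x k (i k) := by
  simp only [Units.smul_def, f.map_sum, f.map_smul_univ]

lemma smul_sum_injective_map [DecidableEq ι] [∀ k, AddCommGroup (E k)] [AddCommGroup G]
    (f : MultilinearMap ℤ E G) (x : ∀ k, ι → E k) :
    ((2 : ℤ) ^ Fintype.card ι) ^ Fintype.card κ • ∑ i : κ → ι with Injective i,
        f (fun k => x k (i k)) =
      ∑ v : κ → ι → ℤˣ, ∑ σ : Perm κ,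
        σ.sign • f fun k => ∑ j, (v k * v (σ k)) j • x k j := by
  have expand (v : κ → ι → ℤˣ) :
      ∑ σ : Perm κ, σ.sign • f (fun k => ∑ j, (v k * v (σ k)) j • x k j) =
        ∑ i : κ → ι, ((∏ k, (v k (i k) : ℤ)) * (of fun k l => (v k (i l) : ℤ)).det) •
          f fun k => x k (i k) := by
    simp only [map_sum_units_smul f (fun k => v k * v (_ : κ))]
    simp only [Units.smul_def, Finset.smul_sum, smul_smul]
    rw [Finset.sum_comm]
    refine Finset.sum_congr rfl fun i _ => ?_
    have hdet := prod_diag_mul_det (of fun k l => (v k (i l) : ℤ))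
    simp only [of_apply, Int.cast_id] at hdet
    simp only [hdet, ← Finset.sum_smul, Pi.mul_apply, Units.val_mul]
  simp only [expand]
  rw [Finset.sum_comm, Finset.sum_filter, Finset.smul_sum]
  simp only [← Finset.sum_smul, sum_signs_prod_mul_det, ite_smul, zero_smul, smul_ite,
    smul_zero]

lemma norm_sum_injective_map_le [DecidableEq ι] [∀ k, SeminormedAddCommGroup (E k)]
    [∀ k, NormedSpace ℝ (E k)] [SeminormedAddCommGroup G] [NormedSpace ℝ G]
    (f : ContinuousMultilinearMap ℝ E G) {x : ∀ k, ι → E k} {C : κ → ℝ}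
    (hC : ∀ k (e : ι → ℤˣ), ‖∑ j, e j • x k j‖ ≤ C k) :
    ‖∑ i : κ → ι with Injective i, f fun k => x k (i k)‖ ≤
      (Fintype.card κ).factorial * (‖f‖ * ∏ k, C k) := by
  have hterm (v : κ → ι → ℤˣ) (σ : Perm κ) :
      ‖σ.sign • f fun k => ∑ j, (v k * v (σ k)) j • x k j‖ ≤ ‖f‖ * ∏ k, C k := by
    rw [norm_units_zsmul]
    exact f.le_opNorm_mul_prod_of_le fun k => hC k _
  have hidentity := congrArg norm
    (smul_sum_injective_map (f.toMultilinearMap.restrictScalars ℤ) x)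
  rw [norm_zsmul ℝ] at hidentity
  have hpos : (0 : ℝ) < (2 ^ Fintype.card ι) ^ Fintype.card κ := by positivity
  refine le_of_mul_le_mul_left ?_ hpos
  calc
    _ = ‖∑ v : κ → ι → ℤˣ, ∑ σ : Perm κ,
          σ.sign • f fun k => ∑ j, (v k * v (σ k)) j • x k j‖ := by
      simpa using hidentity
    _ ≤ ∑ _v : κ → ι → ℤˣ, ∑ _σ : Perm κ, ‖f‖ * ∏ k, C k :=
      norm_sum_le_of_le _ fun v _ => norm_sum_le_of_le _ fun σ _ => hterm v σ
    _ = _ := by simp [Fintype.card_perm]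

end Multilinear

lemma norm_le_of_neg_algebraMap_le_of_le_algebraMap {A : Type*} [CStarAlgebra A]
    [PartialOrder A] [StarOrderedRing A] {a : A} {r : ℝ} (hr : 0 ≤ r)
    (hneg : -algebraMap ℝ A r ≤ a) (hle : a ≤ algebraMap ℝ A r) : ‖a‖ ≤ r := by
  cases subsingleton_or_nontrivial A
  · rwa [norm_of_subsingleton]
  have ha : IsSelfAdjoint a := by
    simpa using (IsSelfAdjoint.algebraMap A (.all r)).sub (sub_nonneg.2 hle).isSelfAdjoint
  rcases CStarAlgebra.norm_or_neg_norm_mem_spectrum ha with h | h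
  · exact (le_algebraMap_iff_spectrum_le ha).1 hle _ h
  · rw [← map_neg] at hneg
    exact neg_le_neg_iff.1 ((algebraMap_le_iff_le_spectrum ha).1 hneg _ h)

lemma norm_le_norm_of_neg_le_of_le {A : Type*} [NonUnitalCStarAlgebra A] [PartialOrder A]
    [StarOrderedRing A] {a b : A} (hneg : -b ≤ a) (hle : a ≤ b) : ‖a‖ ≤ ‖b‖ := by
  have hb : IsSelfAdjoint b := by
    have : IsSelfAdjoint ((2 : ℝ)⁻¹ • ((b - a) + (a - -b))) :=
      (IsSelfAdjoint.all _).smul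
        ((sub_nonneg.2 hle).isSelfAdjoint.add (sub_nonneg.2 hneg).isSelfAdjoint)
    convert this using 1
    module
  have ha : IsSelfAdjoint a := by
    simpa using hb.sub (sub_nonneg.2 hle).isSelfAdjoint
  have hb' : IsSelfAdjoint (b : Unitization ℂ A) := hb.inr ℂ
  have hneg' : -(b : Unitization ℂ A) ≤ a := by
    rw [← Unitization.inr_neg]
    exact (Unitization.inr_le_iff _ _ hb.neg ha).2 hneg
  have hle' : (a : Unitization ℂ A) ≤ b := (Unitization.inr_le_iff _ _ ha hb).2 hle
  rw [← Unitization.norm_inr (𝕜 := ℂ) a, ← Unitization.norm_inr (𝕜 := ℂ) b]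
  exact norm_le_of_neg_algebraMap_le_of_le_algebraMap (norm_nonneg _)
    ((neg_le_neg hb'.le_algebraMap_norm_self).trans hneg')
    (hle'.trans hb'.le_algebraMap_norm_self)

lemma norm_sum_units_smul_le {A ι : Type*} [NonUnitalCStarAlgebra A] [PartialOrder A]
    [StarOrderedRing A] {s : Finset ι} {x : ι → A} (hx : ∀ j ∈ s, 0 ≤ x j) (e : ι → ℤˣ) :
    ‖∑ j ∈ s, e j • x j‖ ≤ ‖∑ j ∈ s, x j‖ := by
  have hterm {j} (hj : j ∈ s) : -x j ≤ e j • x j ∧ e j • x j ≤ x j := by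
    have neg_le : -x j ≤ x j := (neg_nonpos.2 (hx j hj)).trans (hx j hj)
    rcases Int.units_eq_one_or (e j) with h | h <;> simp [h, neg_le]
  refine norm_le_norm_of_neg_le_of_le ?_ (Finset.sum_le_sum fun j hj => (hterm hj).2)
  rw [← Finset.sum_neg_distrib]
  exact Finset.sum_le_sum fun j hj => (hterm hj).1

lemma norm_sum_injective_prod_le {A : Type*} [CStarAlgebra A] [PartialOrder A]
    [StarOrderedRing A] {ι : Type*} [Fintype ι] [DecidableEq ι] (d : ℕ) {x : ι → A}
    (hx : ∀ j, 0 ≤ x j) :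
    ‖∑ i : Fin d → ι with Injective i, ((List.finRange d).map fun k => x (i k)).prod‖ ≤
      d.factorial * ‖∑ j, x j‖ ^ d := by
  cases subsingleton_or_nontrivial A
  · rw [norm_of_subsingleton]
    positivity
  · have h := norm_sum_injective_map_le (ContinuousMultilinearMap.mkPiAlgebraFin ℝ d A)
      (x := fun _ => x) fun _ => norm_sum_units_smul_le fun j _ => hx j
    simpa [List.ofFn_eq_map] using h

lemma smul_avgProd_one {A : Type*} [Ring A] [Module ℝ A] (n : ℕ) (x : Fin n → A) :
    (n : ℝ) • avgProd n 1 x = ∑ j, x j := by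
  cases n with
  | zero => simp
  | succ m =>
    have hcoeff : ((m + 1 : ℕ) : ℝ) * (m.factorial / (m + 1).factorial) = 1 := by
      rw [Nat.factorial_succ]
      push_cast
      field_simp
    rw [avgProd, Nat.add_sub_cancel, smul_smul, hcoeff, one_smul,
      Finset.filter_true_of_mem fun i _ => injective_of_subsingleton i,
      ← (Equiv.funUnique (Fin 1) (Fin (m + 1))).sum_comp]
    simp [List.finRange_succ]

theorem norm_avgProd_le_general {A : Type*} [CStarAlgebra A] [PartialOrder A]
    [StarOrderedRing A] (n d : ℕ) {x : Fin n → A} (hx : ∀ j, 0 ≤ x j) :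
    ‖avgProd n d x‖ ≤
      ((Nat.factorial d : ℝ) * (n : ℝ) ^ d * (Nat.factorial (n - d) : ℝ) /
          (Nat.factorial n : ℝ)) * ‖avgProd n 1 x‖ ^ d := by
  have hmean : ‖∑ j, x j‖ = n * ‖avgProd n 1 x‖ := by
    rw [← smul_avgProd_one, norm_smul, Real.norm_natCast]
  calc
    ‖avgProd n d x‖
      = (n - d).factorial / n.factorial *
          ‖∑ i : Fin d → Fin n with Injective i,
            ((List.finRange d).map fun k => x (i k)).prod‖ := by
      rw [avgProd, norm_smul, Real.norm_of_nonneg (by positivity)]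
    _ ≤ (n - d).factorial / n.factorial * (d.factorial * ‖∑ j, x j‖ ^ d) := by
      gcongr
      exact norm_sum_injective_prod_le d hx
    _ = _ := by
      rw [hmean]
      ring

/-- Dimension-free noncommutative AGM inequality (norm version, with explicit
constant): for positive bounded operators `x_1, …, x_n` on a complex Hilbert space
and `1 ≤ d ≤ n`,
`‖P_d(x_1,…,x_n)‖ ≤ (d! n^d (n-d)!/n!) ‖P_1(x_1,…,x_n)‖^d`. -/
theorem norm_avgProd_le {H : Type*} [NormedAddCommGroup H]
    [InnerProductSpace ℂ H] [CompleteSpace H] (n d : ℕ) (hd : 1 ≤ d) (hdn : d ≤ n)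
    (x : Fin n → H →L[ℂ] H) (hx : ∀ j, (x j).IsPositive) :
    ‖avgProd n d x‖ ≤
      ((Nat.factorial d : ℝ) * (n : ℝ) ^ d * (Nat.factorial (n - d) : ℝ) /
          (Nat.factorial n : ℝ)) * ‖avgProd n 1 x‖ ^ d :=
  norm_avgProd_le_general n d fun j => (ContinuousLinearMap.nonneg_iff_isPositive (x j)).2 (hx j)
end

section
/- Let H be a complex Hilbert space, 1 ≤ d ≤ n, and let x_1,…,x_n be positive bounded operators on H satisfying ∑_{i=1}^n x_i = n·1 (n times the identity operator). Set a_i := x_i − 1. Then P_d(x_1,…,x_n) = 1 + ∑_{k=1}^{d} binom(d,k)·P_k(a_1,…,a_n). -/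
open scoped BigOperators

/-!
Averaging over injective tuples is the same as applying a uniformly random permutation `σ` to one
fixed repetition-free list of indices, because permutations act transitively on injective tuples.
Expanding `∏ (1 + a (σ i))` over a list of `d` indices gives one ordered product for each sublist,
and a sublist of length `k` is again repetition-free, so it averages to `P_k(a)`; there are
`d.choose k` such sublists.
-/

section Lists

variable {ι : Type*}

theorem prod_map_one_add_eq_sum_sublists' {R : Type*} [Semiring R] (l : List ι) (f : ι → R) :
    (l.map fun i => 1 + f i).prod = (l.sublists'.map fun s => (s.map f).prod).sum := by
  induction l with
  | nil => simp
  | cons i l ih => simp [ih, add_mul, List.sum_map_mul_left, Function.comp_def]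

theorem sum_map_length_sublists' {M : Type*} [AddCommMonoid M] (l : List ι) (p : ℕ → M) :
    (l.sublists'.map fun s => p s.length).sum =
      ∑ k ∈ Finset.range (l.length + 1), l.length.choose k • p k := by
  have hconst (k : ℕ) :
      ((l.sublistsLen k).map fun s => p s.length).sum = l.length.choose k • p k := by
    rw [← List.length_sublistsLen, ← List.length_map (fun s => p s.length)]
    refine List.sum_eq_card_nsmul _ _ fun y hy => ?_
    obtain ⟨s, hs, rfl⟩ := List.mem_map.1 hy
    rw [List.length_of_sublistsLen hs]
  rw [← ((List.range_bind_sublistsLen_perm l).map _).sum_eq, List.map_flatMap,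
    List.flatMap_def, List.sum_flatten, List.map_map, ← List.sum_toFinset _ List.nodup_range,
    List.toFinset_range]
  exact Finset.sum_congr rfl fun k _ => hconst k

end Lists

section Averages

variable {M : Type*} [AddCommMonoid M] [Module ℚ≥0 M]

theorem expect_list_sum_comm {ι κ : Type*} (s : Finset ι) (l : List κ) (f : ι → κ → M) :
    𝔼 i ∈ s, (l.map (f i)).sum = (l.map fun j => 𝔼 i ∈ s, f i j).sum := by
  induction l with
  | nil => simp
  | cons j l ih => simp [Finset.expect_add_distrib, ih]

theorem expect_smul_eq_expect {G X : Type*} [Group G] [Fintype G] [Fintype X] [MulAction G X]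
    [MulAction.IsPretransitive G X] (F : X → M) (x : X) :
    𝔼 g : G, F (g • x) = 𝔼 y, F y := by
  have : Nonempty X := ⟨x⟩
  have orbit_average_const (y : X) : 𝔼 g : G, F (g • y) = 𝔼 g : G, F (g • x) := by
    obtain ⟨h, rfl⟩ := MulAction.exists_smul_eq G x y
    exact Fintype.expect_equiv (Equiv.mulRight h) _ _ fun g => by simp [mul_smul]
  calc 𝔼 g : G, F (g • x)
    _ = 𝔼 y, 𝔼 g : G, F (g • y) := by simp only [orbit_average_const, Fintype.expect_const]
    _ = 𝔼 g : G, 𝔼 y, F (g • y) := Finset.expect_comm _ _ _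
    _ = 𝔼 _g : G, 𝔼 y, F y := Finset.expect_congr rfl fun g _ =>
      Fintype.expect_equiv (MulAction.toPerm g) _ _ fun _ => rfl
    _ = 𝔼 y, F y := Fintype.expect_const _

end Averages

section AverageProducts

variable {A : Type*} [Ring A] [Module ℝ A]

theorem avgProd_zero (n : ℕ) (x : Fin n → A) : avgProd n 0 x = 1 := by
  simp [avgProd, Function.injective_of_subsingleton, Nat.factorial_ne_zero]

theorem avgProd_eq_expect_embedding [Module ℚ≥0 A] (n d : ℕ) (x : Fin n → A) :
    avgProd n d x = 𝔼 i : Fin d ↪ Fin n, ((List.finRange d).map fun k => x (i k)).prod := by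
  have hsum : ∑ i : Fin d → Fin n with Function.Injective i,
        ((List.finRange d).map fun k => x (i k)).prod =
      ∑ i : Fin d ↪ Fin n, ((List.finRange d).map fun k => x (i k)).prod := by
    rw [Finset.sum_subtype (p := Function.Injective) _ (by simp)]
    exact Fintype.sum_equiv (Equiv.subtypeInjectiveEquivEmbedding _ _) _ _ fun _ => rfl
  rw [avgProd, hsum]
  rcases le_or_gt d n with hdn | hnd
  · have hcoeff : ((n - d).factorial : ℝ) / n.factorial =
        (((Fintype.card (Fin d ↪ Fin n) : ℚ≥0)⁻¹ : ℚ≥0) : ℝ) := by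
      rw [Fintype.card_embedding_eq, Fintype.card_fin, Fintype.card_fin,
        ← Nat.factorial_mul_descFactorial hdn]
      push_cast
      rw [div_mul_cancel_left₀ (by positivity)]
    rw [hcoeff, NNRat.cast_smul_eq_nnqsmul, Finset.expect_univ]
  · have : IsEmpty (Fin d ↪ Fin n) := Function.Embedding.isEmpty_of_card_lt (by simpa using hnd)
    simp

theorem expect_perm_prod_of_nodup [Module ℚ≥0 A] {n : ℕ} (x : Fin n → A) {l : List (Fin n)}
    (hl : l.Nodup) :
    𝔼 σ : Equiv.Perm (Fin n), (l.map fun i => x (σ i)).prod = avgProd n l.length x := by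
  let j : Fin l.length ↪ Fin n := ⟨l.get, hl.injective_get⟩
  have := Equiv.Perm.isMultiplyPretransitive (Fin n) l.length
  rw [avgProd_eq_expect_embedding, ← expect_smul_eq_expect (G := Equiv.Perm (Fin n)) _ j]
  refine Finset.expect_congr rfl fun σ _ => ?_
  conv_lhs => rw [← List.map_get_finRange l, List.map_map]
  rfl

theorem avgProd_one_add {n d : ℕ} (hdn : d ≤ n) (a : Fin n → A) :
    avgProd n d (fun i => 1 + a i) =
      ∑ k ∈ Finset.range (d + 1), d.choose k • avgProd n k a := by
  -- `𝔼` needs `ℚ≥0`-scalars; no choice is made here, as a `ℚ≥0`-module structure is unique.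
  let : Module ℚ≥0 A := Module.compHom A (algebraMap ℚ≥0 ℝ)
  obtain ⟨l, hl, rfl⟩ : ∃ l : List (Fin n), l.Nodup ∧ l.length = d :=
    ⟨(List.finRange n).take d, (List.nodup_finRange n).take, by simpa using hdn⟩
  calc avgProd n l.length (fun i => 1 + a i)
    _ = 𝔼 σ : Equiv.Perm (Fin n), (l.map fun i => 1 + a (σ i)).prod :=
      (expect_perm_prod_of_nodup _ hl).symm
    _ = (l.sublists'.map fun s =>
          𝔼 σ : Equiv.Perm (Fin n), (s.map fun i => a (σ i)).prod).sum := by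
      simp only [prod_map_one_add_eq_sum_sublists', expect_list_sum_comm]
    _ = (l.sublists'.map fun s => avgProd n s.length a).sum :=
      congrArg List.sum <| List.map_congr_left fun s hs =>
        expect_perm_prod_of_nodup a (hl.sublist (List.mem_sublists'.1 hs))
    _ = _ := sum_map_length_sublists' l fun k => avgProd n k a

theorem avgProd_eq_one_add_sum_general {n d : ℕ} (hdn : d ≤ n) (x a : Fin n → A)
    (ha : ∀ i, a i = x i - 1) :
    avgProd n d x = 1 + ∑ k ∈ Finset.Icc 1 d, (d.choose k : ℝ) • avgProd n k a := by
  obtain rfl : x = fun i => 1 + a i := funext fun i => by simp [ha]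
  simp only [avgProd_one_add hdn, Nat.cast_smul_eq_nsmul]
  rw [Finset.range_eq_Ico, Finset.sum_eq_sum_Ico_succ_bot d.add_one_pos, zero_add,
    Finset.Ico_add_one_right_eq_Icc, Nat.choose_zero_right, one_smul, avgProd_zero]

end AverageProducts

/-- For positive bounded operators `x_1, …, x_n` on a complex Hilbert space with
`∑ x_i = n • 1`, setting `a_i := x_i - 1`, one has
`P_d(x_1,…,x_n) = 1 + ∑_{k=1}^{d} (d choose k) P_k(a_1,…,a_n)`. -/
theorem avgProd_eq_one_add_sum {H : Type*} [NormedAddCommGroup H]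
    [InnerProductSpace ℂ H] [CompleteSpace H] (n d : ℕ) (hd : 1 ≤ d) (hdn : d ≤ n)
    (x : Fin n → H →L[ℂ] H) (hx : ∀ j, (x j).IsPositive)
    (hsum : ∑ i, x i = n • (1 : H →L[ℂ] H))
    (a : Fin n → H →L[ℂ] H) (ha : ∀ i, a i = x i - 1) :
    avgProd n d x =
      1 + ∑ k ∈ Finset.Icc 1 d, (d.choose k : ℝ) • avgProd n k a :=
  avgProd_eq_one_add_sum_general hdn x a ha
end

section
/- Let H be a complex Hilbert space, let d ≥ 2, and let a_1,…,a_n be self-adjoint bounded operators on H with ∑_{i=1}^n a_i = 0. Let S ≥ ‖∑_{i=1}^n a_i²‖^{1/2}. For a partition ν of {1,…,d}, define [ν] := ∑_{j : ker(j) ≥ ν} a_{j_1} a_{j_2} ⋯ a_{j_d} and the transposed sum [ν̄] := ∑_{j : ker(j) ≥ ν} a_{j_d} a_{j_{d−1}} ⋯ a_{j_1}, summing over j ∈ {1,…,n}^d constant on each block of ν. Then, in the order of self-adjoint operators, −2·S^{d−2}·∑_{i=1}^n a_i² ≤ [ν] + [ν̄] ≤ 2·S^{d−2}·∑_{i=1}^n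 a_i². -/
/-!
The quadratic form of `[ν]` at `x` is the sum of `⟪a_{j_1} x, a_{j_2} ⋯ a_{j_{d-1}} (a_{j_d} x)⟫`,
where one label is chosen for each block of `ν`. Apply the inner letters from right to left, and
index the family of vectors obtained so far by the labels of the *open* blocks: those already met
that will be met again. A letter whose block stays open multiplies the sum of squared norms by at
most `‖∑ i, a i ^ 2‖`, because the column of the `a i` has norm `‖∑ i, a i ^ 2‖ ^ (1 / 2)`. A letter
that closes a block acts through the row of the `a i`, the adjoint of the column, at the same cost.
A letter that is alone in its block contributes `∑ i, a i = 0`. Cauchy–Schwarz against the family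
`a i x` on the left bounds `[ν]` by `‖∑ i, a i ^ 2‖ ^ ((d - 2) / 2) * ∑ i, ‖a i x‖ ^ 2`; the same
bound holds for `[ν̄]`, and `[ν] + [ν̄]` is symmetric.
-/

open scoped InnerProductSpace

section DependsOn

variable {β ι X : Type*}

theorem dependsOn_list_prod_map [Monoid X] (a : ι → X) {u : List β} {s : Set β}
    (hu : ∀ b ∈ u, b ∈ s) : DependsOn (fun c : β → ι => (u.map fun b => a (c b)).prod) s :=
  fun _ _ h => congrArg List.prod <| List.map_congr_left fun b hb => congrArg a (h b (hu b hb))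

variable [DecidableEq β]

theorem apply_update_eq_of_dependsOn {f : (β → ι) → X} {s : Set β} (hf : DependsOn f s) {b : β}
    (hb : b ∉ s) (c : β → ι) (i : ι) : f (Function.update c b i) = f c :=
  hf fun _ hk => Function.update_of_ne (ne_of_mem_of_not_mem hk hb) _ _

theorem dependsOn_comp_update {f : (β → ι) → X} {s : Set β} (hf : DependsOn f s) (b : β) (i : ι) :
    DependsOn (fun c => f (Function.update c b i)) (s \ {b}) := by
  intro c c' h
  refine hf fun k hk => ?_
  by_cases hkb : k = b
  · subst hkb
    simp only [Function.update_self]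
  · simpa only [Function.update_of_ne hkb] using h k ⟨hk, hkb⟩

end DependsOn

section Labelings

variable {β ι M : Type*} [Fintype β] [DecidableEq β] [Fintype ι] [AddCommMonoid M]

/-- The labelings `β → ι` that agree with the reference labeling `c₀` off `R`. A function of the
labels on `R` is summed over these: every label outside `R` is counted once. -/
def labelings (c₀ : β → ι) (R : Finset β) : Finset (β → ι) :=
  Fintype.piFinset fun b => if b ∈ R then Finset.univ else {c₀ b}

theorem mem_labelings {c₀ c : β → ι} {R : Finset β} :
    c ∈ labelings c₀ R ↔ ∀ b ∉ R, c b = c₀ b := by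
  simp only [labelings, Fintype.mem_piFinset]
  refine forall_congr' fun b => ?_
  by_cases hb : b ∈ R <;> simp [hb]

theorem labelings_univ (c₀ : β → ι) : labelings c₀ Finset.univ = Finset.univ := by
  simp [Finset.ext_iff, mem_labelings]

theorem labelings_empty (c₀ : β → ι) : labelings c₀ ∅ = {c₀} := by
  simp [Finset.ext_iff, mem_labelings, funext_iff]

theorem sum_labelings_insert (c₀ : β → ι) {R : Finset β} {b : β} (hb : b ∉ R)
    (f : (β → ι) → M) :
    ∑ c ∈ labelings c₀ (insert b R), f c =
      ∑ c ∈ labelings c₀ R, ∑ i, f (Function.update c b i) := by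
  rw [← Finset.sum_product']
  refine Finset.sum_bij' (fun c _ => (Function.update c b (c₀ b), c b))
    (fun p _ => Function.update p.1 b p.2) ?_ ?_ ?_ ?_ ?_
  · intro c hc
    simp only [Finset.mem_product, Finset.mem_univ, and_true, mem_labelings] at hc ⊢
    intro k hk
    by_cases hkb : k = b
    · simp [hkb]
    · simp [hkb, hc k (by simp [hkb, hk])]
  · intro p hp
    simp only [Finset.mem_product, Finset.mem_univ, and_true, mem_labelings] at hp ⊢
    intro k hk
    rw [Finset.mem_insert, not_or] at hk
    simp [hk.1, hp k hk.2]
  · simp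
  · intro p hp
    simp only [Finset.mem_product, Finset.mem_univ, and_true, mem_labelings] at hp
    ext1 <;> simp [← hp b hb]
  · simp

theorem sum_labelings_singleton (c₀ : β → ι) (b : β) (f : (β → ι) → M) :
    ∑ c ∈ labelings c₀ {b}, f c = ∑ i, f (Function.update c₀ b i) := by
  rw [← insert_empty_eq, sum_labelings_insert c₀ (Finset.notMem_empty b), labelings_empty,
    Finset.sum_singleton]

end Labelings

section Operators

variable {𝕜 E ι : Type*} [RCLike 𝕜] [NormedAddCommGroup E] [InnerProductSpace 𝕜 E]

theorem norm_sum_inner_sq_le {κ : Type*} (s : Finset κ) (f g : κ → E) :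
    ‖∑ k ∈ s, ⟪f k, g k⟫_𝕜‖ ^ 2 ≤ (∑ k ∈ s, ‖f k‖ ^ 2) * ∑ k ∈ s, ‖g k‖ ^ 2 :=
  calc ‖∑ k ∈ s, ⟪f k, g k⟫_𝕜‖ ^ 2 ≤ (∑ k ∈ s, ‖f k‖ * ‖g k‖) ^ 2 := by
        gcongr
        exact norm_sum_le_of_le _ fun k _ => norm_inner_le_norm _ _
    _ ≤ _ := Finset.sum_mul_sq_le_sq_mul_sq _ _ _

theorem isPositive_add_and_sub_of_abs_re_inner_le {A B : E →L[𝕜] E} (hA : A.IsSymmetric)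
    (hB : B.IsSymmetric) (h : ∀ x, |RCLike.re ⟪A x, x⟫_𝕜| ≤ RCLike.re ⟪B x, x⟫_𝕜) :
    (A + B).IsPositive ∧ (B - A).IsPositive := by
  refine ⟨⟨hA.add hB, fun x => ?_⟩, ⟨hB.sub hA, fun x => ?_⟩⟩
  · rw [ContinuousLinearMap.reApplyInnerSelf_apply, add_apply, inner_add_left, map_add]
    linarith [neg_le_of_abs_le (h x)]
  · rw [ContinuousLinearMap.reApplyInnerSelf_apply, sub_apply, inner_sub_left, map_sub]
    linarith [le_of_abs_le (h x)]

section RowColumn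

variable [Fintype ι] {a : ι → E →L[𝕜] E}

theorem inner_sum_sq_apply_self (ha : ∀ i, (a i).IsSymmetric) (x : E) :
    ⟪(∑ i, a i ^ 2) x, x⟫_𝕜 = ((∑ i, ‖a i x‖ ^ 2 : ℝ) : 𝕜) := by
  rw [sum_apply, sum_inner, RCLike.ofReal_sum]
  refine Finset.sum_congr rfl fun i _ => ?_
  rw [pow_two, mul_apply_eq_comp, (ha i).apply_clm, inner_self_eq_norm_sq_to_K, RCLike.ofReal_pow]

theorem sum_norm_sq_apply_le_s10 (ha : ∀ i, (a i).IsSymmetric) (x : E) :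
    ∑ i, ‖a i x‖ ^ 2 ≤ ‖∑ i, a i ^ 2‖ * ‖x‖ ^ 2 :=
  calc ∑ i, ‖a i x‖ ^ 2 = ‖⟪(∑ i, a i ^ 2) x, x⟫_𝕜‖ := by
        rw [inner_sum_sq_apply_self ha, RCLike.norm_ofReal, abs_of_nonneg (by positivity)]
    _ ≤ ‖(∑ i, a i ^ 2) x‖ * ‖x‖ := norm_inner_le_norm _ _
    _ ≤ ‖∑ i, a i ^ 2‖ * ‖x‖ * ‖x‖ := by gcongr; exact ContinuousLinearMap.le_opNorm _ _
    _ = ‖∑ i, a i ^ 2‖ * ‖x‖ ^ 2 := by ring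

theorem norm_sum_apply_sq_le (ha : ∀ i, (a i).IsSymmetric) (y : ι → E) :
    ‖∑ i, a i (y i)‖ ^ 2 ≤ ‖∑ i, a i ^ 2‖ * ∑ i, ‖y i‖ ^ 2 := by
  set z := ∑ i, a i (y i) with hz
  have hinner : ⟪z, z⟫_𝕜 = ∑ i, ⟪a i z, y i⟫_𝕜 := by
    conv_lhs => rw [hz, inner_sum]
    exact Finset.sum_congr rfl fun i _ => ((ha i).apply_clm z (y i)).symm
  have hmul : ‖z‖ ^ 2 * ‖z‖ ^ 2 ≤ ‖z‖ ^ 2 * (‖∑ i, a i ^ 2‖ * ∑ i, ‖y i‖ ^ 2) :=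
    calc ‖z‖ ^ 2 * ‖z‖ ^ 2 = ‖∑ i, ⟪a i z, y i⟫_𝕜‖ ^ 2 := by
          rw [← hinner, inner_self_eq_norm_sq_to_K, norm_pow, RCLike.norm_ofReal, abs_norm, ← sq]
      _ ≤ (∑ i, ‖a i z‖ ^ 2) * ∑ i, ‖y i‖ ^ 2 := norm_sum_inner_sq_le _ _ _
      _ ≤ ‖∑ i, a i ^ 2‖ * ‖z‖ ^ 2 * ∑ i, ‖y i‖ ^ 2 := by
          gcongr
          exact sum_norm_sq_apply_le_s10 ha z
      _ = ‖z‖ ^ 2 * (‖∑ i, a i ^ 2‖ * ∑ i, ‖y i‖ ^ 2) := by ring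
  rcases (sq_nonneg ‖z‖).eq_or_lt with hz0 | hpos
  · rw [← hz0]
    positivity
  · exact le_of_mul_le_mul_left hmul hpos

end RowColumn

section Words

variable {β : Type*} [Fintype β] [DecidableEq β] [Fintype ι] {a : ι → E →L[𝕜] E} {C : ℝ}

theorem sum_norm_sq_apply_label_le (hrow : ∀ x, ∑ i, ‖a i x‖ ^ 2 ≤ C * ‖x‖ ^ 2)
    {O : Finset β} {G : (β → ι) → E} (hG : DependsOn G (O : Set β)) (c₀ : β → ι) (b : β) :
    ∑ c ∈ labelings c₀ (insert b O), ‖a (c b) (G c)‖ ^ 2 ≤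
      C * ∑ c ∈ labelings c₀ O, ‖G c‖ ^ 2 := by
  rw [Finset.mul_sum]
  by_cases hb : b ∈ O
  · rw [Finset.insert_eq_of_mem hb]
    refine Finset.sum_le_sum fun c _ => le_trans ?_ (hrow (G c))
    exact Finset.single_le_sum (f := fun i => ‖a i (G c)‖ ^ 2)
      (fun i _ => sq_nonneg _) (Finset.mem_univ (c b))
  · rw [sum_labelings_insert c₀ hb]
    refine Finset.sum_le_sum fun c _ => ?_
    simpa only [Function.update_self, apply_update_eq_of_dependsOn hG hb] using hrow (G c)

theorem sum_norm_sq_sum_apply_update_le (hC : 0 ≤ C) (hsum : ∑ i, a i = 0)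
    (hcol : ∀ y : ι → E, ‖∑ i, a i (y i)‖ ^ 2 ≤ C * ∑ i, ‖y i‖ ^ 2)
    {O : Finset β} {G : (β → ι) → E} (hG : DependsOn G (O : Set β)) (c₀ : β → ι) (b : β) :
    ∑ c ∈ labelings c₀ (O.erase b), ‖∑ i, a i (G (Function.update c b i))‖ ^ 2 ≤
      C * ∑ c ∈ labelings c₀ O, ‖G c‖ ^ 2 := by
  by_cases hb : b ∈ O
  · conv_rhs => rw [← Finset.insert_erase hb]
    rw [sum_labelings_insert c₀ (Finset.notMem_erase b O), Finset.mul_sum]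
    exact Finset.sum_le_sum fun c _ => hcol _
  · have hzero : ∀ c, ∑ i, a i (G (Function.update c b i)) = 0 := fun c => by
      simp_rw [apply_update_eq_of_dependsOn hG hb, ← sum_apply, hsum, zero_apply]
    simp only [hzero, norm_zero, ne_eq, OfNat.ofNat_ne_zero, not_false_eq_true, zero_pow,
      Finset.sum_const_zero]
    positivity

theorem sum_inner_apply_labelings_insert (c₀ : β → ι) {R : Finset β} {b : β} (hb : b ∉ R)
    {w : (β → ι) → E} {L : (β → ι) → E →L[𝕜] E} (hw : DependsOn w (R : Set β))
    (hL : DependsOn L (R : Set β)) (F : (β → ι) → E) :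
    ∑ c ∈ labelings c₀ (insert b R), ⟪w c, L c (F c)⟫_𝕜 =
      ∑ c ∈ labelings c₀ R, ⟪w c, L c (∑ i, F (Function.update c b i))⟫_𝕜 := by
  rw [sum_labelings_insert c₀ hb]
  simp only [apply_update_eq_of_dependsOn hw hb, apply_update_eq_of_dependsOn hL hb, map_sum,
    inner_sum]

/-- Multiplying the family `G` by the letter at `b` opens the label of `b` if it occurs further to
the left, that is in `R`, and sums it out otherwise. -/
theorem exists_sum_inner_apply_letter_eq (hC : 0 ≤ C) (hsum : ∑ i, a i = 0)
    (hrow : ∀ x, ∑ i, ‖a i x‖ ^ 2 ≤ C * ‖x‖ ^ 2)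
    (hcol : ∀ y : ι → E, ‖∑ i, a i (y i)‖ ^ 2 ≤ C * ∑ i, ‖y i‖ ^ 2) (c₀ : β → ι)
    {R O : Finset β} {b : β} (hO : O ⊆ insert b R) {w : (β → ι) → E}
    {L : (β → ι) → E →L[𝕜] E} {G : (β → ι) → E} (hw : DependsOn w (R : Set β))
    (hL : DependsOn L (R : Set β)) (hG : DependsOn G (O : Set β)) :
    ∃ O' ⊆ R, ∃ G' : (β → ι) → E, DependsOn G' (O' : Set β) ∧
      ∑ c ∈ labelings c₀ (insert b R), ⟪w c, L c (a (c b) (G c))⟫_𝕜 =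
        ∑ c ∈ labelings c₀ R, ⟪w c, L c (G' c)⟫_𝕜 ∧
      ∑ c ∈ labelings c₀ O', ‖G' c‖ ^ 2 ≤ C * ∑ c ∈ labelings c₀ O, ‖G c‖ ^ 2 := by
  by_cases hb : b ∈ R
  · rw [Finset.insert_eq_of_mem hb] at hO ⊢
    refine ⟨insert b O, Finset.insert_subset hb hO, fun c => a (c b) (G c), fun c c' h => ?_, rfl,
      sum_norm_sq_apply_label_le hrow hG c₀ b⟩
    have hGc : G c = G c' := hG fun k hk => h k (Finset.mem_insert_of_mem hk)
    simp only [h b (Finset.mem_insert_self b O), hGc]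
  · refine ⟨O.erase b, Finset.subset_insert_iff.1 hO,
      fun c => ∑ i, a i (G (Function.update c b i)), fun c c' h => ?_, ?_,
      sum_norm_sq_sum_apply_update_le hC hsum hcol hG c₀ b⟩
    · rw [Finset.coe_erase] at h
      exact Finset.sum_congr rfl fun i _ => congrArg (a i) (dependsOn_comp_update hG b i h)
    · simp only [sum_inner_apply_labelings_insert c₀ hb hw hL, Function.update_self]

theorem norm_sum_inner_word_sq_le (hC : 0 ≤ C) (hsum : ∑ i, a i = 0)
    (hrow : ∀ x, ∑ i, ‖a i x‖ ^ 2 ≤ C * ‖x‖ ^ 2)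
    (hcol : ∀ y : ι → E, ‖∑ i, a i (y i)‖ ^ 2 ≤ C * ∑ i, ‖y i‖ ^ 2) (c₀ : β → ι)
    {v : ι → E} (hv : ∑ i, v i = 0) (b₀ : β) (u : List β) {O : Finset β} {G : (β → ι) → E}
    (hG : DependsOn G (O : Set β)) (hO : O ⊆ insert b₀ u.toFinset) :
    ‖∑ c ∈ labelings c₀ (insert b₀ u.toFinset),
        ⟪v (c b₀), (u.map fun b => a (c b)).prod (G c)⟫_𝕜‖ ^ 2 ≤
      C ^ u.length * (∑ i, ‖v i‖ ^ 2) * ∑ c ∈ labelings c₀ O, ‖G c‖ ^ 2 := by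
  induction u using List.reverseRecOn generalizing O G with
  | nil =>
    simp only [List.toFinset_nil, insert_empty_eq, List.map_nil, List.prod_nil,
      one_apply_eq_self, List.length_nil, pow_zero, one_mul] at hO ⊢
    rcases Finset.subset_singleton_iff.1 hO with rfl | rfl
    · have hzero : ∑ c ∈ labelings c₀ {b₀}, ⟪v (c b₀), G c⟫_𝕜 = 0 := by
        rw [Finset.coe_empty] at hG
        simp only [fun c => hG.empty c c₀, ← sum_inner, sum_labelings_singleton,
          Function.update_self, hv, inner_zero_left]
      rw [hzero, norm_zero, zero_pow two_ne_zero]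
      positivity
    · have h := norm_sum_inner_sq_le (𝕜 := 𝕜) (labelings c₀ {b₀}) (fun c => v (c b₀)) G
      simpa only [sum_labelings_singleton, Function.update_self] using h
  | append_singleton u b ih =>
    have hR : insert b₀ (u ++ [b]).toFinset = insert b (insert b₀ u.toFinset) := by
      ext k
      simp [or_left_comm]
    rw [hR] at hO ⊢
    simp only [List.map_append, List.map_cons, List.map_nil, List.prod_append, List.prod_singleton,
      mul_apply_eq_comp]
    have hw : DependsOn (fun c : β → ι => v (c b₀)) (insert b₀ u.toFinset : Finset β) :=
      fun c c' h => congrArg v (h b₀ (Finset.mem_insert_self _ _))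
    have hL : DependsOn (fun c : β → ι => (u.map fun k => a (c k)).prod)
        (insert b₀ u.toFinset : Finset β) :=
      dependsOn_list_prod_map a fun k hk => Finset.mem_insert_of_mem (List.mem_toFinset.2 hk)
    obtain ⟨O', hO', G', hG', hsum_eq, hle⟩ :=
      exists_sum_inner_apply_letter_eq hC hsum hrow hcol c₀ hO hw hL hG
    rw [hsum_eq]
    calc _ ≤ C ^ u.length * (∑ i, ‖v i‖ ^ 2) * ∑ c ∈ labelings c₀ O', ‖G' c‖ ^ 2 := ih hG' hO'
      _ ≤ C ^ u.length * (∑ i, ‖v i‖ ^ 2) * (C * ∑ c ∈ labelings c₀ O, ‖G c‖ ^ 2) := by gcongr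
      _ = _ := by
        rw [List.length_append, List.length_singleton, pow_succ]
        ring

theorem norm_sum_inner_word_apply_sq_le (hC : 0 ≤ C) (hsum : ∑ i, a i = 0)
    (hrow : ∀ x, ∑ i, ‖a i x‖ ^ 2 ≤ C * ‖x‖ ^ 2)
    (hcol : ∀ y : ι → E, ‖∑ i, a i (y i)‖ ^ 2 ≤ C * ∑ i, ‖y i‖ ^ 2) {v v' : ι → E}
    (hv : ∑ i, v i = 0) (hv' : ∑ i, v' i = 0) {b₀ b₁ : β} {u : List β}
    (hletters : insert b₁ (insert b₀ u.toFinset) = Finset.univ) :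
    ‖∑ c : β → ι, ⟪v (c b₀), (u.map fun b => a (c b)).prod (v' (c b₁))⟫_𝕜‖ ^ 2 ≤
      C ^ u.length * (∑ i, ‖v i‖ ^ 2) * ∑ i, ‖v' i‖ ^ 2 := by
  rcases isEmpty_or_nonempty (β → ι) with hempty | ⟨⟨c₀⟩⟩
  · rw [Fintype.sum_empty, norm_zero, zero_pow two_ne_zero]
    positivity
  have hw : DependsOn (fun c : β → ι => v (c b₀)) (insert b₀ u.toFinset : Finset β) :=
    fun c c' h => congrArg v (h b₀ (Finset.mem_insert_self _ _))
  have hL : DependsOn (fun c : β → ι => (u.map fun b => a (c b)).prod)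
      (insert b₀ u.toFinset : Finset β) :=
    dependsOn_list_prod_map a fun k hk => Finset.mem_insert_of_mem (List.mem_toFinset.2 hk)
  rw [← labelings_univ c₀, ← hletters]
  by_cases hb : b₁ ∈ insert b₀ u.toFinset
  · rw [Finset.insert_eq_of_mem hb]
    have hG : DependsOn (fun c : β → ι => v' (c b₁)) (({b₁} : Finset β) : Set β) :=
      fun c c' h => congrArg v' (h b₁ (Finset.mem_singleton_self b₁))
    have h := norm_sum_inner_word_sq_le hC hsum hrow hcol c₀ hv b₀ u hG
      (Finset.singleton_subset_iff.2 hb)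
    simpa only [sum_labelings_singleton, Function.update_self] using h
  · rw [sum_inner_apply_labelings_insert c₀ hb hw hL]
    simp only [Function.update_self, hv', map_zero, inner_zero_right, Finset.sum_const_zero,
      norm_zero, ne_eq, OfNat.ofNat_ne_zero, not_false_eq_true, zero_pow]
    positivity

theorem norm_inner_sum_word_le (ha : ∀ i, (a i).IsSymmetric) (hsum : ∑ i, a i = 0) {w : List β}
    (hmem : ∀ b, b ∈ w) (hlen : 2 ≤ w.length) (x : E) :
    ‖⟪x, (∑ c : β → ι, (w.map fun b => a (c b)).prod) x⟫_𝕜‖ ≤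
      √‖∑ i, a i ^ 2‖ ^ (w.length - 2) * ∑ i, ‖a i x‖ ^ 2 := by
  obtain ⟨b₀, t, rfl⟩ := List.exists_cons_of_length_pos (zero_lt_two.trans_le hlen)
  obtain rfl | ⟨u, b₁, rfl⟩ := t.eq_nil_or_concat'
  · simp at hlen
  have hletters : insert b₁ (insert b₀ u.toFinset) = Finset.univ := by
    ext k
    simpa [or_comm, or_left_comm] using hmem k
  have hsumx : ∑ i, a i x = 0 := by rw [← sum_apply, hsum, zero_apply]
  have hexpand : ⟪x, (∑ c : β → ι, ((b₀ :: (u ++ [b₁])).map fun b => a (c b)).prod) x⟫_𝕜 =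
      ∑ c : β → ι, ⟪a (c b₀) x, (u.map fun b => a (c b)).prod (a (c b₁) x)⟫_𝕜 := by
    simp [sum_apply, inner_sum, (ha _).apply_clm]
  have hsq := norm_sum_inner_word_apply_sq_le (norm_nonneg _) hsum (sum_norm_sq_apply_le_s10 ha)
    (norm_sum_apply_sq_le ha) hsumx hsumx hletters
  have hlength : (b₀ :: (u ++ [b₁])).length - 2 = u.length := by simp
  rw [hexpand, hlength]
  refine le_of_sq_le_sq (hsq.trans_eq ?_) (by positivity)
  rw [mul_pow, ← pow_mul, mul_comm u.length, pow_mul, Real.sq_sqrt (norm_nonneg _)]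
  ring

end Words

section FullPartitionSum

/-- The sum `∑ a (j k₁) ⋯ a (j kₘ)` over the tuples `j` whose kernel is coarser than `ν`, for a list
`l = [k₁, …, kₘ]` of positions. The increasing list of all positions gives `[ν]` and the decreasing
one gives `[ν̄]`. -/
noncomputable def fullPartitionSum {α ι R : Type*} [Semiring R] (a : ι → R) (ν : Setoid α)
    (l : List α) : R :=
  ∑ᶠ j ∈ {j : α → ι | ν ≤ Setoid.ker j}, (l.map fun k => a (j k)).prod

theorem fullPartitionSum_eq_sum {α ι R : Type*} [Semiring R] (a : ι → R) (ν : Setoid α)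
    [Fintype (Quotient ν → ι)] (l : List α) :
    fullPartitionSum a ν l =
      ∑ c : Quotient ν → ι, ((l.map (Quotient.mk ν)).map fun q => a (c q)).prod := by
  rw [fullPartitionSum, ← finsum_set_coe_eq_finsum_mem, ← finsum_eq_sum_of_fintype,
    ← finsum_comp_equiv (Setoid.liftEquiv ν)]
  refine finsum_congr fun j => ?_
  rw [List.map_map]
  rfl

variable {α : Type*} {a : ι → E →L[𝕜] E}

theorem inner_list_prod_map_apply {f : α → E →L[𝕜] E} (hf : ∀ k, (f k).IsSymmetric) (l : List α)
    (x y : E) : ⟪(l.map f).prod x, y⟫_𝕜 = ⟪x, (l.reverse.map f).prod y⟫_𝕜 := by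
  induction l generalizing x y with
  | nil => simp
  | cons k l ih => simp [(hf k).apply_clm, ih]

theorem inner_fullPartitionSum_apply [Finite α] [Finite ι] (ha : ∀ i, (a i).IsSymmetric)
    (ν : Setoid α) (l : List α) (x y : E) :
    ⟪fullPartitionSum a ν l x, y⟫_𝕜 = ⟪x, fullPartitionSum a ν l.reverse y⟫_𝕜 := by
  have := Fintype.ofFinite (Quotient ν → ι)
  rw [fullPartitionSum_eq_sum, fullPartitionSum_eq_sum, sum_apply, sum_apply, sum_inner, inner_sum]
  refine Finset.sum_congr rfl fun c _ => ?_
  rw [List.map_reverse, inner_list_prod_map_apply fun q => ha (c q)]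

variable [Fintype ι]

theorem norm_inner_fullPartitionSum_le (ha : ∀ i, (a i).IsSymmetric) (hsum : ∑ i, a i = 0)
    (ν : Setoid α) {l : List α} (hmem : ∀ k, k ∈ l) (hlen : 2 ≤ l.length) (x : E) :
    ‖⟪fullPartitionSum a ν l x, x⟫_𝕜‖ ≤
      √‖∑ i, a i ^ 2‖ ^ (l.length - 2) * ∑ i, ‖a i x‖ ^ 2 := by
  classical
  have hletters : ∀ q, q ∈ l.map (Quotient.mk ν) :=
    Quotient.ind fun k => List.mem_map_of_mem (hmem k)
  let _ : Fintype (Quotient ν) := ⟨(l.map (Quotient.mk ν)).toFinset, by simpa using hletters⟩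
  rw [fullPartitionSum_eq_sum, norm_inner_symm, ← List.length_map (Quotient.mk ν)]
  exact norm_inner_sum_word_le ha hsum hletters (by rwa [List.length_map]) x

theorem abs_re_inner_fullPartitionSum_add_reverse_le (ha : ∀ i, (a i).IsSymmetric)
    (hsum : ∑ i, a i = 0) {S : ℝ} (hS : √‖∑ i, a i ^ 2‖ ≤ S) (ν : Setoid α) {l : List α}
    (hmem : ∀ k, k ∈ l) (hlen : 2 ≤ l.length) (x : E) :
    |RCLike.re ⟪(fullPartitionSum a ν l + fullPartitionSum a ν l.reverse) x, x⟫_𝕜| ≤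
      2 * S ^ (l.length - 2) * ∑ i, ‖a i x‖ ^ 2 := by
  have hl := norm_inner_fullPartitionSum_le ha hsum ν hmem hlen x
  have hl' := norm_inner_fullPartitionSum_le ha hsum ν (l := l.reverse)
    (fun k => List.mem_reverse.2 (hmem k)) (by rwa [List.length_reverse]) x
  rw [List.length_reverse] at hl'
  calc _ ≤ ‖⟪fullPartitionSum a ν l x, x⟫_𝕜 + ⟪fullPartitionSum a ν l.reverse x, x⟫_𝕜‖ := by
        rw [add_apply, inner_add_left]
        exact RCLike.abs_re_le_norm _
    _ ≤ 2 * √‖∑ i, a i ^ 2‖ ^ (l.length - 2) * ∑ i, ‖a i x‖ ^ 2 := by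
        linarith [norm_add_le_of_le hl hl']
    _ ≤ 2 * S ^ (l.length - 2) * ∑ i, ‖a i x‖ ^ 2 := by gcongr

theorem fullPartitionSum_add_transpose_le_general (ha : ∀ i, (a i).IsSymmetric)
    (hsum : ∑ i, a i = 0) {S : ℝ} (hS : √‖∑ i, a i ^ 2‖ ≤ S) (ν : Setoid α) {l : List α}
    (hmem : ∀ k, k ∈ l) (hlen : 2 ≤ l.length) :
    (fullPartitionSum a ν l + fullPartitionSum a ν l.reverse -
        ((-(2 * S ^ (l.length - 2)) : ℝ) : 𝕜) • ∑ i, a i ^ 2).IsPositive ∧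
      (((2 * S ^ (l.length - 2) : ℝ) : 𝕜) • (∑ i, a i ^ 2) -
        (fullPartitionSum a ν l + fullPartitionSum a ν l.reverse)).IsPositive := by
  have : Finite α := Set.finite_univ_iff.1 (l.finite_toSet.subset fun k _ => hmem k)
  have hsymm : (fullPartitionSum a ν l + fullPartitionSum a ν l.reverse).IsSymmetric :=
    fun x y => by simp [inner_add_left, inner_add_right, inner_fullPartitionSum_apply ha, add_comm]
  have hsq : (((2 * S ^ (l.length - 2) : ℝ) : 𝕜) • ∑ i, a i ^ 2).IsSymmetric := by
    refine .smul (RCLike.conj_ofReal _) fun x y => ?_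
    simp [sum_inner, inner_sum, pow_two, (ha _).apply_clm]
  rw [RCLike.ofReal_neg, neg_smul, sub_neg_eq_add]
  refine isPositive_add_and_sub_of_abs_re_inner_le hsymm hsq fun x => ?_
  rw [smul_apply, inner_smul_left, RCLike.conj_ofReal, inner_sum_sq_apply_self ha,
    ← RCLike.ofReal_mul, RCLike.ofReal_re]
  exact abs_re_inner_fullPartitionSum_add_reverse_le ha hsum hS ν hmem hlen x

end FullPartitionSum

end Operators

/-- For self-adjoint bounded operators `a_1, …, a_n` on a complex Hilbert space with
`∑ a_i = 0`, `d ≥ 2`, `S ≥ ‖∑ a_i²‖^(1/2)`, and any partition `ν` of `{1,…,d}`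
(modeled as `Setoid (Fin d)`), the full partition sum
`[ν] = ∑_{j : ker j ≥ ν} a_{j 1} ⋯ a_{j d}` and its transpose
`[ν̄] = ∑_{j : ker j ≥ ν} a_{j d} ⋯ a_{j 1}` satisfy, in the order of
self-adjoint operators,
`-2 S^(d-2) ∑ a_i² ≤ [ν] + [ν̄] ≤ 2 S^(d-2) ∑ a_i²`
(where `a ≤ b` means that `b - a` is a positive operator). -/
theorem fullPartitionSum_add_transpose_le {H : Type*} [NormedAddCommGroup H]
    [InnerProductSpace ℂ H] [CompleteSpace H] (n d : ℕ) (hd : 2 ≤ d)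
    (a : Fin n → H →L[ℂ] H) (ha : ∀ i, IsSelfAdjoint (a i))
    (hsum : ∑ i, a i = 0) (S : ℝ) (hS : Real.sqrt ‖∑ i, (a i) ^ 2‖ ≤ S)
    (ν : Setoid (Fin d))
    (T T' : H →L[ℂ] H)
    (hT : T = ∑ᶠ j ∈ {j : Fin d → Fin n | ν ≤ Setoid.ker j},
        ((List.finRange d).map (fun k => a (j k))).prod)
    (hT' : T' = ∑ᶠ j ∈ {j : Fin d → Fin n | ν ≤ Setoid.ker j},
        ((List.finRange d).reverse.map (fun k => a (j k))).prod) :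
    ((T + T') - (-(2 * S ^ (d - 2)) • ∑ i, (a i) ^ 2)).IsPositive ∧
      ((2 * S ^ (d - 2)) • (∑ i, (a i) ^ 2) - (T + T')).IsPositive := by
  have h := fullPartitionSum_add_transpose_le_general (fun i => (ha i).isSymmetric) hsum hS ν
    List.mem_finRange (by rwa [List.length_finRange])
  simpa only [List.length_finRange, ← RCLike.real_smul_eq_coe_smul, fullPartitionSum, hT, hT']
    using h
end

section
/- Let H be a complex Hilbert space, 2 ≤ d ≤ n, and let x_1,…,x_n be positive bounded operators on H with ∑_{i=1}^n x_i = n·1. Set a_i := x_i − 1 and S := ‖∑_{i=1}^n x_i²‖^{1/2}. Then, in the order of self-adjoint operators, −((n−d)!/n!)·d!·S^{d−2}·∑_{i=1}^n a_i² ≤ P_d(a_1,…,a_n) ≤ ((n−d)!/n!)·d!·S^{d−2}·∑_{i=1}^n a_i². -/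
open scoped BigOperators

/-!
For a tuple `i`, the indicator of injectivity is the determinant of the coincidence matrix
`(1_{i p = i q})`, so the sum over injective tuples is the signed sum, over the `d!` permutations
`σ` of the positions, of the sums over tuples constant on the cycles of `σ`. In the latter each
cycle is a free index. An index occurring only once is summed out to `∑ a_i = 0`. If every index
occurs at least twice, split off the first and the last letter of the word and apply Cauchy–Schwarz;
each of the remaining `d - 2` letters costs a factor `S`, by the column bound
`∑ ‖a_i u‖² ≤ S² ‖u‖²` or its adjoint. The column bound holds because `∑ a_i² = ∑ x_i² - n • 1`.
-/

open Function
open Finset hiding sum_apply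
open scoped InnerProductSpace

section PartialSum

variable {ι κ : Type*} [Fintype ι] [Fintype κ] [DecidableEq κ]

theorem sum_sum_update {M : Type*} [AddCommMonoid M] (k : κ) (f : (κ → ι) → M) :
    ∑ j, ∑ m, f (update j k m) = Fintype.card ι • ∑ j, f j := by
  have hswap : ∑ p : (κ → ι) × ι, f (update p.1 k p.2) = ∑ p : (κ → ι) × ι, f p.1 := by
    refine sum_nbij' (fun p => (update p.1 k p.2, p.1 k)) (fun p => (update p.1 k p.2, p.1 k))
      ?_ ?_ ?_ ?_ ?_ <;> simp
  rw [← Fintype.sum_prod_type', hswap, Fintype.sum_prod_type]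
  simp only [sum_const, card_univ, smul_sum]

theorem sum_eq_zero_of_sum_update_eq_zero {M : Type*} [AddCommMonoid M] (k : κ)
    {f : (κ → ι) → M} (hf : ∀ j, ∑ m, f (update j k m) = 0) : ∑ j, f j = 0 := by
  rw [← (Equiv.funSplitAt k ι).symm.sum_comp, Fintype.sum_prod_type_right]
  refine sum_eq_zero fun g _ => ?_
  rcases isEmpty_or_nonempty ι with _ | ⟨⟨m₀⟩⟩
  · exact Fintype.sum_empty _
  · rw [← hf ((Equiv.funSplitAt k ι).symm (m₀, g))]
    refine sum_congr rfl fun m _ => congrArg f (funext fun l => ?_)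
    by_cases hl : l = k <;> simp [hl]

/-- The sum of `f j` over the coordinates of `j` in `O`, averaged over the remaining ones. For `f`
depending only on the coordinates in `O` it is the sum over functions `O → ι`; averaging keeps all
such sums over the one index type `κ → ι`. -/
noncomputable def partialSum {M : Type*} [AddCommMonoid M] [Module ℚ≥0 M] (O : Finset κ)
    (f : (κ → ι) → M) : M :=
  Fintype.card ι ^ #O • 𝔼 j, f j

theorem partialSum_univ {M : Type*} [AddCommMonoid M] [Module ℚ≥0 M] (f : (κ → ι) → M) :
    partialSum univ f = ∑ j, f j := by
  rw [partialSum, card_univ, ← Fintype.card_fun, Fintype.card_smul_expect]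

theorem partialSum_insert {M : Type*} [AddCommMonoid M] [Module ℚ≥0 M] {O : Finset κ} {k : κ}
    (hk : k ∉ O) (f : (κ → ι) → M) :
    partialSum (insert k O) f = partialSum O fun j => ∑ m, f (update j k m) := by
  rw [partialSum, partialSum, card_insert_of_notMem hk, pow_succ, mul_smul, expect_univ,
    expect_univ, sum_sum_update, smul_comm (Fintype.card ι)]

theorem partialSum_singleton {M : Type*} [AddCommMonoid M] [Module ℚ≥0 M] (k : κ) (g : ι → M) :
    partialSum {k} (fun j => g (j k)) = ∑ i, g i := by
  rw [← insert_empty_eq k, partialSum_insert (notMem_empty k)]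
  simp only [update_self, partialSum, card_empty, pow_zero, one_smul]
  rcases isEmpty_or_nonempty ι with _ | _
  · simp
  · exact Fintype.expect_const _

theorem partialSum_mono (O : Finset κ) {f g : (κ → ι) → ℝ} (hfg : ∀ j, f j ≤ g j) :
    partialSum O f ≤ partialSum O g :=
  nsmul_le_nsmul_right (expect_le_expect fun j _ => hfg j) _

theorem partialSum_const_mul (O : Finset κ) (r : ℝ) (f : (κ → ι) → ℝ) :
    partialSum O (fun j => r * f j) = r * partialSum O f := by
  rw [partialSum, partialSum, ← mul_expect, mul_smul_comm]

theorem norm_partialSum_inner_sq_le {𝕜 H : Type*} [RCLike 𝕜] [NormedAddCommGroup H]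
    [InnerProductSpace 𝕜 H] (O : Finset κ) (φ ψ : (κ → ι) → H) :
    ‖partialSum O fun j => ⟪φ j, ψ j⟫_𝕜‖ ^ 2 ≤
      partialSum O (fun j => ‖φ j‖ ^ 2) * partialSum O fun j => ‖ψ j‖ ^ 2 := by
  have hnorm : ‖𝔼 j, ⟪φ j, ψ j⟫_𝕜‖ ≤ 𝔼 j, ‖φ j‖ * ‖ψ j‖ :=
    (RCLike.norm_expect_le (K := 𝕜)).trans (expect_le_expect fun j _ => norm_inner_le_norm _ _)
  have hsq : ‖𝔼 j, ⟪φ j, ψ j⟫_𝕜‖ ^ 2 ≤ (𝔼 j, ‖φ j‖ ^ 2) * 𝔼 j, ‖ψ j‖ ^ 2 :=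
    (pow_le_pow_left₀ (norm_nonneg _) hnorm 2).trans (expect_mul_sq_le_sq_mul_sq _ _ _)
  simp only [partialSum, nsmul_eq_mul, norm_mul, mul_pow, Nat.cast_pow, norm_pow,
    RCLike.norm_natCast]
  calc _ ≤ ((Fintype.card ι : ℝ) ^ #O) ^ 2 * ((𝔼 j, ‖φ j‖ ^ 2) * 𝔼 j, ‖ψ j‖ ^ 2) := by gcongr
    _ = _ := by ring

end PartialSum

section WordProd

variable {ι κ μ M : Type*}

/-- The product `a (j w₁) * a (j w₂) * ⋯` spelled by the word `w`, whose letters are placeholders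
to be filled by the assignment `j`. -/
def wordProd [Monoid M] (a : ι → M) (w : List κ) (j : κ → ι) : M :=
  (w.map fun t => a (j t)).prod

section Monoid

variable [Monoid M] (a : ι → M)

theorem wordProd_cons (k : κ) (w : List κ) (j : κ → ι) :
    wordProd a (k :: w) j = a (j k) * wordProd a w j := by
  rw [wordProd, List.map_cons, List.prod_cons, wordProd]

theorem wordProd_append (w w' : List κ) (j : κ → ι) :
    wordProd a (w ++ w') j = wordProd a w j * wordProd a w' j := by
  rw [wordProd, List.map_append, List.prod_append, wordProd, wordProd]

theorem wordProd_map (b : μ → κ) (w : List μ) (j : κ → ι) :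
    wordProd a (w.map b) j = wordProd a w (j ∘ b) := by
  rw [wordProd, List.map_map]
  rfl

theorem wordProd_update_of_notMem [DecidableEq κ] {k : κ} {w : List κ} (hk : k ∉ w)
    (j : κ → ι) (m : ι) : wordProd a w (update j k m) = wordProd a w j :=
  congrArg List.prod <| List.map_congr_left fun t ht => by
    rw [update_of_ne (ne_of_mem_of_not_mem ht hk)]

end Monoid

theorem sum_wordProd_eq_zero [Fintype ι] [Fintype κ] [DecidableEq κ] {A : Type*} [Semiring A]
    {a : ι → A} (hsum : ∑ i, a i = 0) {k : κ} {w : List κ} (hk : w.count k = 1) :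
    ∑ j, wordProd a w j = 0 := by
  obtain ⟨u, u', rfl⟩ := List.append_of_mem (List.count_pos_iff.1 (hk ▸ Nat.one_pos))
  obtain ⟨hu, hu'⟩ : k ∉ u ∧ k ∉ u' := by
    simp only [List.count_append, List.count_cons_self] at hk
    exact ⟨List.count_eq_zero.1 (by omega), List.count_eq_zero.1 (by omega)⟩
  refine sum_eq_zero_of_sum_update_eq_zero k fun j => ?_
  simp only [wordProd_append, wordProd_cons, wordProd_update_of_notMem a hu,
    wordProd_update_of_notMem a hu', update_self]
  rw [← mul_sum, ← sum_mul, hsum, zero_mul, mul_zero]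

end WordProd

section WordBound

variable {𝕜 H : Type*} [RCLike 𝕜] [NormedAddCommGroup H] [InnerProductSpace 𝕜 H]
variable {ι κ : Type*}

theorem inner_wordProd_cons {a : ι → H →L[𝕜] H} (hsymm : ∀ i, (a i).IsSymmetric) (k : κ)
    (w : List κ) (j : κ → ι) (u v : H) :
    ⟪u, wordProd a (k :: w) j v⟫_𝕜 = ⟪a (j k) u, wordProd a w j v⟫_𝕜 := by
  rw [wordProd_cons, mul_apply_eq_comp]
  exact (hsymm _ _ _).symm

theorem inner_wordProd_left {a : ι → H →L[𝕜] H} (hsymm : ∀ i, (a i).IsSymmetric) (w : List κ)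
    (j : κ → ι) (u v : H) :
    ⟪wordProd a w j u, v⟫_𝕜 = ⟪u, wordProd a w.reverse j v⟫_𝕜 := by
  induction w generalizing u v with
  | nil => simp [wordProd]
  | cons k w ih =>
    have hk : ⟪a (j k) (wordProd a w j u), v⟫_𝕜 = ⟪wordProd a w j u, a (j k) v⟫_𝕜 := hsymm _ _ _
    rw [wordProd_cons, mul_apply_eq_comp, hk, ih, List.reverse_cons, wordProd_append,
      mul_apply_eq_comp]
    simp [wordProd]

theorem dependsOn_insert_apply [DecidableEq κ] (a : ι → H →L[𝕜] H) (k : κ) {O : Finset κ}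
    {φ : (κ → ι) → H} (hφ : DependsOn φ O) :
    DependsOn (fun j => a (j k) (φ j)) (insert k O : Finset κ) :=
  fun j j' hj => by
    dsimp only
    rw [hj k (mem_insert_self k O), hφ fun l hl => hj l (mem_insert_of_mem hl)]

variable [Fintype ι]

theorem dependsOn_erase_sum_apply_update [DecidableEq κ] (a : ι → H →L[𝕜] H) (k : κ)
    {O : Finset κ} {φ : (κ → ι) → H} (hφ : DependsOn φ O) :
    DependsOn (fun j => ∑ m, a m (φ (update j k m))) (O.erase k) := fun j j' hj => by
  refine sum_congr rfl fun m _ => congrArg (a m) (hφ fun l hl => ?_)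
  by_cases hlk : l = k
  · rw [hlk, update_self, update_self]
  · rw [update_of_ne hlk, update_of_ne hlk, hj l (mem_erase.2 ⟨hlk, hl⟩)]

theorem isSymmetric_sum_sq {a : ι → H →L[𝕜] H} (hsymm : ∀ i, (a i).IsSymmetric) :
    (∑ i, a i ^ 2).IsSymmetric := by
  simpa using LinearMap.isSymmetric_sum univ fun i _ => (hsymm i).pow 2

theorem inner_sum_sq_apply {a : ι → H →L[𝕜] H} (hsymm : ∀ i, (a i).IsSymmetric) (u : H) :
    ⟪u, (∑ i, a i ^ 2) u⟫_𝕜 = ((∑ i, ‖a i u‖ ^ 2 : ℝ) : 𝕜) := by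
  rw [sum_apply, inner_sum, RCLike.ofReal_sum]
  refine sum_congr rfl fun i _ => ?_
  have hi : ⟪a i u, a i u⟫_𝕜 = ⟪u, a i (a i u)⟫_𝕜 := hsymm i _ _
  rw [pow_two, mul_apply_eq_comp, ← hi, inner_self_eq_norm_sq_to_K, RCLike.ofReal_pow]

/-- The row operator `(fᵢ) ↦ ∑ aᵢ fᵢ` is the adjoint of the column operator `u ↦ (aᵢ u)`. -/
theorem norm_sum_apply_sq_le_s11 {a : ι → H →L[𝕜] H} {S : ℝ} (hsymm : ∀ i, (a i).IsSymmetric)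
    (hcol : ∀ u, ∑ i, ‖a i u‖ ^ 2 ≤ S ^ 2 * ‖u‖ ^ 2) (f : ι → H) :
    ‖∑ i, a i (f i)‖ ^ 2 ≤ S ^ 2 * ∑ i, ‖f i‖ ^ 2 := by
  set y := ∑ i, a i (f i) with hy
  have hadj : ⟪y, y⟫_𝕜 = ∑ i, ⟪f i, a i y⟫_𝕜 := by
    conv_lhs => rw [hy, sum_inner]
    exact sum_congr rfl fun i _ => hsymm i _ _
  have hle : ‖y‖ ^ 2 ≤ ∑ i, ‖f i‖ * ‖a i y‖ :=
    calc ‖y‖ ^ 2 = ‖⟪y, y⟫_𝕜‖ := by simp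
      _ ≤ ∑ i, ‖f i‖ * ‖a i y‖ := hadj ▸ norm_sum_le_of_le _ fun i _ => norm_inner_le_norm _ _
  have hsq : ‖y‖ ^ 2 * ‖y‖ ^ 2 ≤ (S ^ 2 * ∑ i, ‖f i‖ ^ 2) * ‖y‖ ^ 2 :=
    calc ‖y‖ ^ 2 * ‖y‖ ^ 2 ≤ (∑ i, ‖f i‖ * ‖a i y‖) ^ 2 := by
          rw [← pow_two]
          gcongr
      _ ≤ (∑ i, ‖f i‖ ^ 2) * ∑ i, ‖a i y‖ ^ 2 := sum_mul_sq_le_sq_mul_sq _ _ _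
      _ ≤ (∑ i, ‖f i‖ ^ 2) * (S ^ 2 * ‖y‖ ^ 2) := by
          gcongr
          exact hcol y
      _ = (S ^ 2 * ∑ i, ‖f i‖ ^ 2) * ‖y‖ ^ 2 := by ring
  rcases (sq_nonneg ‖y‖).eq_or_lt with hzero | hpos
  · rw [← hzero]
    positivity
  · exact le_of_mul_le_mul_right hsq hpos

variable [Fintype κ] [DecidableEq κ]

theorem partialSum_insert_norm_apply_sq_le {a : ι → H →L[𝕜] H} {S : ℝ}
    (hcol : ∀ u, ∑ i, ‖a i u‖ ^ 2 ≤ S ^ 2 * ‖u‖ ^ 2) (k : κ) {O : Finset κ} {φ : (κ → ι) → H}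
    (hφ : DependsOn φ O) :
    partialSum (insert k O) (fun j => ‖a (j k) (φ j)‖ ^ 2) ≤
      S ^ 2 * partialSum O fun j => ‖φ j‖ ^ 2 := by
  rw [← partialSum_const_mul]
  by_cases hk : k ∈ O
  · rw [insert_eq_of_mem hk]
    exact partialSum_mono O fun j =>
      (single_le_sum (f := fun i => ‖a i (φ j)‖ ^ 2) (fun _ _ => sq_nonneg _)
        (mem_univ (j k))).trans (hcol (φ j))
  · have hupd : ∀ j m, φ (update j k m) = φ j := fun j m =>
      hφ fun l hl => update_of_ne (ne_of_mem_of_not_mem hl hk) _ _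
    rw [partialSum_insert hk]
    simp only [update_self, hupd]
    exact partialSum_mono O fun j => hcol (φ j)

theorem partialSum_erase_norm_sum_apply_sq_le {a : ι → H →L[𝕜] H} {S : ℝ}
    (hsymm : ∀ i, (a i).IsSymmetric) (hcol : ∀ u, ∑ i, ‖a i u‖ ^ 2 ≤ S ^ 2 * ‖u‖ ^ 2)
    {k : κ} {O : Finset κ} (hk : k ∈ O) (φ : (κ → ι) → H) :
    partialSum (O.erase k) (fun j => ‖∑ m, a m (φ (update j k m))‖ ^ 2) ≤
      S ^ 2 * partialSum O fun j => ‖φ j‖ ^ 2 := by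
  conv_rhs => rw [← insert_erase hk, partialSum_insert (notMem_erase k O)]
  rw [← partialSum_const_mul]
  exact partialSum_mono _ fun j => norm_sum_apply_sq_le_s11 hsymm hcol _

theorem partialSum_insert_inner_wordProd_cons {a : ι → H →L[𝕜] H}
    (hsymm : ∀ i, (a i).IsSymmetric) {k : κ} {w : List κ} (hk : k ∉ w) {O : Finset κ}
    (hkO : k ∉ O) (φ : (κ → ι) → H) (v : H) :
    partialSum (insert k O) (fun j => ⟪φ j, wordProd a (k :: w) j v⟫_𝕜) =
      partialSum O fun j => ⟪∑ m, a m (φ (update j k m)), wordProd a w j v⟫_𝕜 := by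
  rw [partialSum_insert hkO]
  congr 1 with j
  rw [sum_inner]
  refine sum_congr rfl fun m _ => ?_
  rw [inner_wordProd_cons hsymm, update_self, wordProd_update_of_notMem a hk]

/-- Words are absorbed letter by letter into the left vector, which depends on the set `O` of
letters that have occurred already and will occur again. A letter that recurs costs a column bound;
a last occurrence sums its index out at the cost of a row bound. -/
theorem norm_partialSum_inner_wordProd_sq_le {a : ι → H →L[𝕜] H} {S : ℝ}
    (hsymm : ∀ i, (a i).IsSymmetric) (hcol : ∀ u, ∑ i, ‖a i u‖ ^ 2 ≤ S ^ 2 * ‖u‖ ^ 2) (v : H)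
    (k : κ) (w : List κ) {O : Finset κ} {φ : (κ → ι) → H} (hφ : DependsOn φ O)
    (hO : O ⊆ (k :: w).toFinset) (hcount : ∀ l ∈ k :: w, l ∉ O → 2 ≤ (k :: w).count l) :
    ‖partialSum (k :: w).toFinset fun j => ⟪φ j, wordProd a (k :: w) j v⟫_𝕜‖ ^ 2 ≤
      (S ^ 2) ^ w.length * (partialSum O (fun j => ‖φ j‖ ^ 2) * ∑ i, ‖a i v‖ ^ 2) := by
  induction w generalizing k O φ with
  | nil =>
    obtain rfl : O = {k} := by
      refine (subset_singleton_iff.1 (by simpa using hO)).resolve_left fun hempty => ?_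
      simpa using hcount k List.mem_cons_self (hempty ▸ notMem_empty k)
    rw [List.length_nil, pow_zero, one_mul, ← partialSum_singleton k]
    simpa [wordProd] using norm_partialSum_inner_sq_le {k} φ fun j => a (j k) v
  | cons k' w ih =>
    have hcount' : ∀ l ∈ k' :: w, l ≠ k → l ∉ O → 2 ≤ (k' :: w).count l := fun l hl hlk hlO => by
      simpa [List.count_cons, hlk.symm] using hcount l (List.mem_cons_of_mem _ hl) hlO
    rw [List.length_cons, pow_succ (S ^ 2), mul_assoc, ← mul_assoc (S ^ 2)]
    by_cases hk : k ∈ k' :: w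
    · have hset : (k :: k' :: w).toFinset = (k' :: w).toFinset := by
        rw [List.toFinset_cons, insert_eq_of_mem (List.mem_toFinset.2 hk)]
      simp only [hset, inner_wordProd_cons hsymm k]
      refine (ih k' (dependsOn_insert_apply a k hφ)
        (insert_subset (List.mem_toFinset.2 hk) (hset ▸ hO)) fun l hl hlO => ?_).trans ?_
      · rw [mem_insert, not_or] at hlO
        exact hcount' l hl hlO.1 hlO.2
      · gcongr
        exact partialSum_insert_norm_apply_sq_le hcol k hφ
    · have hkO : k ∈ O := by
        by_contra hkO
        simpa [List.count_eq_zero.2 hk] using hcount k List.mem_cons_self hkO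
      rw [List.toFinset_cons,
        partialSum_insert_inner_wordProd_cons hsymm hk (by rwa [List.mem_toFinset])]
      refine (ih k' (dependsOn_erase_sum_apply_update a k hφ)
        (by rwa [← subset_insert_iff, ← List.toFinset_cons]) fun l hl hlO => ?_).trans ?_
      · have hlk : l ≠ k := ne_of_mem_of_not_mem hl hk
        exact hcount' l hl hlk fun h => hlO (mem_erase.2 ⟨hlk, h⟩)
      · gcongr
        exact partialSum_erase_norm_sum_apply_sq_le hsymm hcol hkO φ

theorem norm_inner_sum_wordProd_le_of_two_le_count {a : ι → H →L[𝕜] H} {S : ℝ} (hS : 0 ≤ S)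
    (hsymm : ∀ i, (a i).IsSymmetric) (hcol : ∀ u, ∑ i, ‖a i u‖ ^ 2 ≤ S ^ 2 * ‖u‖ ^ 2) (v : H)
    {w : List κ} (hw : w ≠ []) (hcount : ∀ k, 2 ≤ w.count k) :
    ‖⟪v, (∑ j, wordProd a w j) v⟫_𝕜‖ ≤ S ^ (w.length - 2) * ∑ i, ‖a i v‖ ^ 2 := by
  obtain ⟨k, k', w, rfl⟩ : ∃ k k' w', w = k :: k' :: w' := by
    match w, hw with
    | [k], _ => simpa using hcount k
    | k :: k' :: w, _ => exact ⟨k, k', w, rfl⟩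
  have hmem : ∀ l, l ∈ k' :: w := fun l => by
    have := hcount l
    by_contra hl
    rw [List.count_cons, List.count_eq_zero.2 hl] at this
    split_ifs at this <;> omega
  have hinner : ⟪v, (∑ j, wordProd a (k :: k' :: w) j) v⟫_𝕜 =
      partialSum (k' :: w).toFinset fun j => ⟪a (j k) v, wordProd a (k' :: w) j v⟫_𝕜 := by
    rw [eq_univ_of_forall fun l => List.mem_toFinset.2 (hmem l), partialSum_univ, sum_apply,
      inner_sum]
    exact sum_congr rfl fun j _ => inner_wordProd_cons hsymm k _ j v v
  have hsq := norm_partialSum_inner_wordProd_sq_le hsymm hcol v k' w (O := {k})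
    (φ := fun j => a (j k) v)
    (fun j j' hj => by dsimp only; rw [hj k (by simp)])
    (singleton_subset_iff.2 (List.mem_toFinset.2 (hmem k)))
    (fun l _ hl => by
      rw [notMem_singleton] at hl
      simpa [List.count_cons, Ne.symm hl] using hcount l)
  rw [partialSum_singleton k fun i => ‖a i v‖ ^ 2, ← hinner, ← pow_two, ← pow_mul, mul_comm 2,
    pow_mul, ← mul_pow] at hsq
  exact (pow_le_pow_iff_left₀ (norm_nonneg _) (by positivity) two_ne_zero).1 hsq

theorem norm_inner_sum_wordProd_le {a : ι → H →L[𝕜] H} {S : ℝ} (hS : 0 ≤ S)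
    (hsum : ∑ i, a i = 0) (hsymm : ∀ i, (a i).IsSymmetric)
    (hcol : ∀ u, ∑ i, ‖a i u‖ ^ 2 ≤ S ^ 2 * ‖u‖ ^ 2) (v : H) {w : List κ} (hw : w ≠ [])
    (hmem : ∀ k, k ∈ w) :
    ‖⟪v, (∑ j, wordProd a w j) v⟫_𝕜‖ ≤ S ^ (w.length - 2) * ∑ i, ‖a i v‖ ^ 2 := by
  by_cases hone : ∃ k, w.count k = 1
  · obtain ⟨k, hk⟩ := hone
    rw [sum_wordProd_eq_zero hsum hk, zero_apply, inner_zero_right, norm_zero]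
    positivity
  · refine norm_inner_sum_wordProd_le_of_two_le_count hS hsymm hcol v hw fun k => ?_
    have hne : w.count k ≠ 1 := fun h => hone ⟨k, h⟩
    have hpos := List.count_pos_iff.2 (hmem k)
    omega

end WordBound

section InjectiveSum

variable {ι κ : Type*} [Fintype κ] [DecidableEq κ] [DecidableEq ι]

/-- Both sides equal the determinant of the coincidence matrix `(1_{i p = i q})`. -/
theorem sum_sign_mul_ite_comp_eq (i : κ → ι) :
    ∑ σ : Equiv.Perm κ, (Equiv.Perm.sign σ : ℤ) * (if i ∘ σ = i then 1 else 0) =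
      if Injective i then 1 else 0 := by
  let C : Matrix κ κ ℤ := Matrix.of fun p q => if i p = i q then 1 else 0
  have hdet : C.det =
      ∑ σ : Equiv.Perm κ, (Equiv.Perm.sign σ : ℤ) * (if i ∘ σ = i then 1 else 0) := by
    rw [Matrix.det_apply']
    refine sum_congr rfl fun σ _ => ?_
    simp [C, prod_ite_zero, funext_iff]
  rw [← hdet]
  split_ifs with hi
  · have hone : C = 1 := by
      ext p q
      simp [C, Matrix.one_apply, hi.eq_iff]
    rw [hone, Matrix.det_one]
  · obtain ⟨p, q, hpq, hne⟩ := not_injective_iff.1 hi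
    exact Matrix.det_zero_of_row_eq hne (funext fun t => by simp [C, hpq])

variable [Fintype ι]

theorem sum_injective_eq_sum_perm {M : Type*} [AddCommGroup M] (F : (κ → ι) → M) :
    ∑ i with Injective i, F i =
      ∑ σ : Equiv.Perm κ, (Equiv.Perm.sign σ : ℤ) • ∑ i with i ∘ σ = i, F i := by
  have hpoint : ∀ i : κ → ι, (if Injective i then F i else 0) =
      ∑ σ : Equiv.Perm κ, (Equiv.Perm.sign σ : ℤ) • if i ∘ σ = i then F i else 0 := fun i => by
    have := congrArg (· • F i) (sum_sign_mul_ite_comp_eq i)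
    simp only [sum_smul, ite_smul, one_smul, zero_smul, mul_smul] at this
    exact this.symm
  simp only [sum_filter, hpoint, smul_sum]
  exact sum_comm

open scoped Classical in
theorem sum_comp_perm_eq_sum_cycles {M : Type*} [AddCommMonoid M] (σ : Equiv.Perm κ)
    (F : (κ → ι) → M) :
    ∑ i with i ∘ σ = i, F i =
      ∑ j : Quotient (Equiv.Perm.SameCycle.setoid σ) → ι, F (j ∘ Quotient.mk _) := by
  symm
  refine sum_bij (fun j _ => j ∘ Quotient.mk _) ?_ ?_ ?_ fun _ _ => rfl
  · intro j _
    refine mem_filter.2 ⟨mem_univ _, funext fun p => congrArg j (Quotient.sound ?_)⟩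
    exact Equiv.Perm.sameCycle_apply_left.2 (Equiv.Perm.SameCycle.refl σ p)
  · intro j _ j' _ h
    exact Quotient.mk_surjective.injective_comp_right h
  · intro i hi
    have hfix : ∀ p, i (σ p) = i p := congrFun (mem_filter.1 hi).2
    have hcycle : ∀ p q, σ.SameCycle p q → i p = i q := by
      intro p q hpq
      obtain ⟨m, -, rfl⟩ := hpq.exists_pow_eq'
      simpa [Equiv.Perm.iterate_eq_pow] using (Semiconj.iterate_right (gb := id) hfix m p).symm
    exact ⟨Quotient.lift i hcycle, mem_univ _, rfl⟩

end InjectiveSum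

section DistinctProdSum

variable {ι : Type*} [Fintype ι] [DecidableEq ι]

/-- The unnormalised average product: the sum of `a i₁ * ⋯ * a i_d` over all `d`-tuples of pairwise
distinct indices. -/
def distinctProdSum {A : Type*} [Semiring A] (d : ℕ) (a : ι → A) : A :=
  ∑ i : Fin d → ι with Injective i, wordProd a (List.finRange d) i

variable {𝕜 H : Type*} [RCLike 𝕜] [NormedAddCommGroup H] [InnerProductSpace 𝕜 H]

theorem isSymmetric_distinctProdSum {a : ι → H →L[𝕜] H} (hsymm : ∀ i, (a i).IsSymmetric)
    (d : ℕ) : (distinctProdSum d a).IsSymmetric := by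
  intro u v
  change ⟪distinctProdSum d a u, v⟫_𝕜 = ⟪u, distinctProdSum d a v⟫_𝕜
  rw [distinctProdSum, sum_apply, sum_apply, sum_inner, inner_sum]
  refine sum_equiv (Fin.revPerm.arrowCongr (Equiv.refl ι)) (fun i => ?_) fun i _ => ?_
  · rw [mem_filter_univ, mem_filter_univ]
    exact (EquivLike.injective_comp Fin.revPerm.symm i).symm
  · rw [inner_wordProd_left hsymm, List.finRange_reverse, wordProd_map]
    rfl

open scoped Classical in
theorem norm_inner_distinctProdSum_le {a : ι → H →L[𝕜] H} {S : ℝ} (hS : 0 ≤ S)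
    (hsum : ∑ i, a i = 0) (hsymm : ∀ i, (a i).IsSymmetric)
    (hcol : ∀ u, ∑ i, ‖a i u‖ ^ 2 ≤ S ^ 2 * ‖u‖ ^ 2) {d : ℕ} (hd : d ≠ 0) (v : H) :
    ‖⟪v, distinctProdSum d a v⟫_𝕜‖ ≤ d.factorial * S ^ (d - 2) * ∑ i, ‖a i v‖ ^ 2 := by
  have hperm : ∀ σ : Equiv.Perm (Fin d),
      ‖⟪v, ((Equiv.Perm.sign σ : ℤ) •
        ∑ i with i ∘ σ = i, wordProd a (List.finRange d) i) v⟫_𝕜‖ ≤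
      S ^ (d - 2) * ∑ i, ‖a i v‖ ^ 2 := fun σ => by
    have hword := norm_inner_sum_wordProd_le hS hsum hsymm hcol v
      (w := (List.finRange d).map (Quotient.mk (Equiv.Perm.SameCycle.setoid σ)))
      (by simpa using hd) (fun k => by simpa using Quotient.mk_surjective k)
    simp only [wordProd_map, List.length_map, List.length_finRange] at hword
    rw [sum_comp_perm_eq_sum_cycles]
    rcases Int.units_eq_one_or (Equiv.Perm.sign σ) with hσ | hσ <;> simpa [hσ] using hword
  rw [distinctProdSum, sum_injective_eq_sum_perm, sum_apply, inner_sum]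
  refine (norm_sum_le_of_le _ fun σ _ => hperm σ).trans_eq ?_
  rw [sum_const, card_univ, Fintype.card_perm, Fintype.card_fin, nsmul_eq_mul, mul_assoc]

end DistinctProdSum

section AvgProd

variable {𝕜 H : Type*} [RCLike 𝕜] [NormedAddCommGroup H] [InnerProductSpace 𝕜 H]

theorem sum_norm_sub_one_apply_sq_le {ι : Type*} [Fintype ι] {x : ι → H →L[𝕜] H}
    (hsymm : ∀ i, (x i).IsSymmetric) (hsum : ∑ i, x i = Fintype.card ι • (1 : H →L[𝕜] H))
    (u : H) : ∑ i, ‖(x i - 1) u‖ ^ 2 ≤ ‖∑ i, x i ^ 2‖ * ‖u‖ ^ 2 := by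
  have hmean : ∑ i, RCLike.re ⟪x i u, u⟫_𝕜 = Fintype.card ι * ‖u‖ ^ 2 := by
    rw [← map_sum, ← sum_inner, ← sum_apply, hsum]
    simp [inner_smul_left, ← Nat.cast_smul_eq_nsmul 𝕜]
  have hcol : ∑ i, ‖x i u‖ ^ 2 ≤ ‖∑ i, x i ^ 2‖ * ‖u‖ ^ 2 :=
    calc ∑ i, ‖x i u‖ ^ 2 = RCLike.re ⟪u, (∑ i, x i ^ 2) u⟫_𝕜 := by
          rw [inner_sum_sq_apply hsymm, RCLike.ofReal_re]
      _ ≤ ‖u‖ * ‖(∑ i, x i ^ 2) u‖ := re_inner_le_norm _ _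
      _ ≤ ‖u‖ * (‖∑ i, x i ^ 2‖ * ‖u‖) := by
          gcongr
          exact ContinuousLinearMap.le_opNorm _ _
      _ = ‖∑ i, x i ^ 2‖ * ‖u‖ ^ 2 := by ring
  have hexpand : ∀ i, ‖(x i - 1) u‖ ^ 2 =
      ‖x i u‖ ^ 2 - 2 * RCLike.re ⟪x i u, u⟫_𝕜 + ‖u‖ ^ 2 := fun i => norm_sub_sq (x i u) u
  calc ∑ i, ‖(x i - 1) u‖ ^ 2 = ∑ i, ‖x i u‖ ^ 2 - Fintype.card ι * ‖u‖ ^ 2 := by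
        simp only [hexpand, sum_add_distrib, sum_sub_distrib, ← mul_sum, hmean, sum_const,
          card_univ, nsmul_eq_mul]
        ring
    _ ≤ ‖∑ i, x i ^ 2‖ * ‖u‖ ^ 2 := by linarith [show 0 ≤ Fintype.card ι * ‖u‖ ^ 2 by positivity]

theorem isPositive_add_and_sub_of_norm_inner_le {T B : H →L[𝕜] H} (hT : T.IsSymmetric)
    (hB : B.IsSymmetric) (h : ∀ u, ‖⟪u, T u⟫_𝕜‖ ≤ RCLike.re ⟪u, B u⟫_𝕜) :
    (T + B).IsPositive ∧ (B - T).IsPositive := by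
  have habs : ∀ u, |RCLike.re ⟪u, T u⟫_𝕜| ≤ RCLike.re ⟪u, B u⟫_𝕜 := fun u =>
    (RCLike.abs_re_le_norm _).trans (h u)
  constructor
  · refine ContinuousLinearMap.isPositive_def.2 ⟨hT.add hB, fun u => ?_⟩
    rw [ContinuousLinearMap.reApplyInnerSelf_apply, inner_re_symm, add_apply, inner_add_right,
      map_add]
    linarith [neg_le_of_abs_le (habs u)]
  · refine ContinuousLinearMap.isPositive_def.2 ⟨hB.sub hT, fun u => ?_⟩
    rw [ContinuousLinearMap.reApplyInnerSelf_apply, inner_re_symm, sub_apply, inner_sub_right,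
      map_sub]
    linarith [le_of_abs_le (habs u)]

variable [NormedSpace ℝ H] [IsScalarTower ℝ 𝕜 H]

theorem norm_inner_avgProd_le (n : ℕ) {d : ℕ} (hd : d ≠ 0) {a : Fin n → H →L[𝕜] H} {S : ℝ}
    (hS : 0 ≤ S) (hsum : ∑ i, a i = 0) (hsymm : ∀ i, (a i).IsSymmetric)
    (hcol : ∀ u, ∑ i, ‖a i u‖ ^ 2 ≤ S ^ 2 * ‖u‖ ^ 2) (v : H) :
    ‖⟪v, avgProd n d a v⟫_𝕜‖ ≤
      (n - d).factorial / n.factorial * d.factorial * S ^ (d - 2) * ∑ i, ‖a i v‖ ^ 2 := by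
  have havg : avgProd n d a = ((n - d).factorial / n.factorial : ℝ) • distinctProdSum d a := rfl
  rw [havg, smul_apply, RCLike.real_smul_eq_coe_smul (K := 𝕜), inner_smul_right, norm_mul,
    RCLike.norm_of_nonneg (by positivity)]
  calc _ ≤ ((n - d).factorial / n.factorial : ℝ) *
        (d.factorial * S ^ (d - 2) * ∑ i, ‖a i v‖ ^ 2) := by
        gcongr
        exact norm_inner_distinctProdSum_le hS hsum hsymm hcol hd v
    _ = _ := by ring

theorem isSymmetric_real_smul {T : H →L[𝕜] H} (hT : T.IsSymmetric) (r : ℝ) :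
    (r • T).IsSymmetric := by
  rw [RCLike.real_smul_eq_coe_smul (K := 𝕜)]
  exact hT.smul (RCLike.conj_ofReal r)

theorem isSymmetric_avgProd {n : ℕ} {a : Fin n → H →L[𝕜] H} (hsymm : ∀ i, (a i).IsSymmetric)
    (d : ℕ) : (avgProd n d a).IsSymmetric :=
  isSymmetric_real_smul (isSymmetric_distinctProdSum hsymm d) _

theorem avgProd_le_sum_sq_general (n d : ℕ) (hd : 2 ≤ d)
    (x : Fin n → H →L[𝕜] H) (hx : ∀ j, (x j).IsSymmetric)
    (hsum : ∑ i, x i = n • (1 : H →L[𝕜] H))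
    (a : Fin n → H →L[𝕜] H) (ha : ∀ i, a i = x i - 1)
    (S : ℝ) (hS : S = Real.sqrt ‖∑ i, (x i) ^ 2‖)
    (c : ℝ)
    (hc : c = (Nat.factorial (n - d) : ℝ) / (Nat.factorial n : ℝ) *
        (Nat.factorial d : ℝ) * S ^ (d - 2)) :
    (avgProd n d a - (-c) • ∑ i, (a i) ^ 2).IsPositive ∧
      (c • (∑ i, (a i) ^ 2) - avgProd n d a).IsPositive := by
  have ha_symm : ∀ i, (a i).IsSymmetric := fun i => ha i ▸ (hx i).sub LinearMap.IsSymmetric.id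
  have ha_sum : ∑ i, a i = 0 := by simp [ha, sum_sub_distrib, hsum]
  have hcol : ∀ u, ∑ i, ‖a i u‖ ^ 2 ≤ S ^ 2 * ‖u‖ ^ 2 := fun u => by
    simpa only [ha, hS, Real.sq_sqrt (norm_nonneg _)] using
      sum_norm_sub_one_apply_sq_le hx (by rwa [Fintype.card_fin]) u
  have hB : (c • ∑ i, a i ^ 2).IsSymmetric :=
    isSymmetric_real_smul (isSymmetric_sum_sq ha_symm) c
  have hbound : ∀ u, ‖⟪u, avgProd n d a u⟫_𝕜‖ ≤ RCLike.re ⟪u, (c • ∑ i, a i ^ 2) u⟫_𝕜 := by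
    intro u
    rw [smul_apply, RCLike.real_smul_eq_coe_smul (K := 𝕜), inner_smul_right,
      inner_sum_sq_apply ha_symm, ← RCLike.ofReal_mul, RCLike.ofReal_re, hc]
    exact norm_inner_avgProd_le n (by omega) (hS ▸ Real.sqrt_nonneg _) ha_sum ha_symm hcol u
  simpa only [neg_smul, sub_neg_eq_add] using
    isPositive_add_and_sub_of_norm_inner_le (isSymmetric_avgProd ha_symm d) hB hbound

end AvgProd

/-- For positive bounded operators `x_1, …, x_n` on a complex Hilbert space with
`∑ x_i = n • 1`, setting `a_i := x_i - 1` and `S := ‖∑ x_i²‖^(1/2)`, one has, in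
the order of self-adjoint operators (`a ≤ b` iff `b - a` is positive),
`-((n-d)!/n!) d! S^(d-2) ∑ a_i² ≤ P_d(a_1,…,a_n) ≤ ((n-d)!/n!) d! S^(d-2) ∑ a_i²`. -/
theorem avgProd_le_sum_sq {H : Type*} [NormedAddCommGroup H]
    [InnerProductSpace ℂ H] [CompleteSpace H] (n d : ℕ) (hd : 2 ≤ d) (hdn : d ≤ n)
    (x : Fin n → H →L[ℂ] H) (hx : ∀ j, (x j).IsPositive)
    (hsum : ∑ i, x i = n • (1 : H →L[ℂ] H))
    (a : Fin n → H →L[ℂ] H) (ha : ∀ i, a i = x i - 1)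
    (S : ℝ) (hS : S = Real.sqrt ‖∑ i, (x i) ^ 2‖)
    (c : ℝ)
    (hc : c = (Nat.factorial (n - d) : ℝ) / (Nat.factorial n : ℝ) *
        (Nat.factorial d : ℝ) * S ^ (d - 2)) :
    (avgProd n d a - (-c) • ∑ i, (a i) ^ 2).IsPositive ∧
      (c • (∑ i, (a i) ^ 2) - avgProd n d a).IsPositive := by
  exact avgProd_le_sum_sq_general n d hd x (fun j => (hx j).isSymmetric) hsum a ha S hS c hc
end
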